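/- arXiv:1810.01100 — 12 statements merged into one kernel-verified Lean document; each statement's English description precedes it below -/
import Mathlib

section
/- Let ℰ ⊆ CL(ℝ) be a family of closed subsets of ℝ. The following are equivalent: (1) there exists G ⊆ C(ℝ,ℝ) such that ℰ ∈ K_G; (2) ℰ is hereditary, i.e., for all closed sets D, E ⊆ ℝ, if D ⊆ E and E ∈ ℰ then D ∈ ℰ. -/
/-!
Families of the form `EG G F` are hereditary, which gives one direction. Conversely, given a
hereditary `ℰ`, let `G` be the continuous functions whose zero set belongs to `ℰ`. Every closed
subset of `ℝ` is a zero set, so the zero function agrees on a closed set `E` with a member of `G`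
exactly when `E` is contained in a member of `ℰ`, that is, when `E ∈ ℰ`. Thus `ℰ = EG G {0}`, and
families of this form are fixed by the Galois connection.
-/

open Set

/-- The set of continuous real functions `C(ℝ,ℝ)`. -/
def ContFun : Set (ℝ → ℝ) := {f | Continuous f}

/-- The family `CL(ℝ)` of closed subsets of `ℝ`. -/
def CLR : Set (Set ℝ) := {E | IsClosed E}

/-- The relation `R_G`: `f` agrees on `E` with some member of `G`. -/
def RG (G : Set (ℝ → ℝ)) (f : ℝ → ℝ) (E : Set ℝ) : Prop := ∃ g ∈ G, Set.EqOn f g E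

/-- `E_G(F)`: closed sets `E` such that every `f ∈ F` agrees on `E` with some member of `G`. -/
def EG (G F : Set (ℝ → ℝ)) : Set (Set ℝ) := {E | E ∈ CLR ∧ ∀ f ∈ F, RG G f E}

/-- `F_G(ℰ)`: continuous functions agreeing on every `E ∈ ℰ` with some member of `G`. -/
def FG (G : Set (ℝ → ℝ)) (ℰ : Set (Set ℝ)) : Set (ℝ → ℝ) := {f | f ∈ ContFun ∧ ∀ E ∈ ℰ, RG G f E}

/-- The lattice `K_G` of closed families of closed sets. -/
def KG (G : Set (ℝ → ℝ)) : Set (Set (Set ℝ)) := {ℰ | EG G (FG G ℰ) = ℰ}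

/-- The lattice `L_G` of closed families of continuous functions. -/
def LG (G : Set (ℝ → ℝ)) : Set (Set (ℝ → ℝ)) := {F | FG G (EG G F) = F}

lemma exists_continuous_zero_set_eq {E : Set ℝ} (hE : IsClosed E) :
    ∃ g : ℝ → ℝ, Continuous g ∧ {x | g x = 0} = E := by
  rcases E.eq_empty_or_nonempty with rfl | hne
  -- `Metric.infDist x ∅ = 0`, so the empty set needs its own witness.
  · exact ⟨fun _ => 1, continuous_const, by simp⟩
  · refine ⟨fun x => Metric.infDist x E, Metric.continuous_infDist_pt E, ?_⟩
    ext x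
    exact (hE.mem_iff_infDist_zero hne).symm

theorem stmt_2 (ℰ : Set (Set ℝ)) (hℰ : ℰ ⊆ CLR) :
    (∃ G ⊆ ContFun, ℰ ∈ KG G) ↔
    (∀ D E : Set ℝ, IsClosed D → IsClosed E → D ⊆ E → E ∈ ℰ → D ∈ ℰ) := by
  constructor
  · rintro ⟨G, -, hK⟩ D E hD - hDE hE
    change EG G (FG G ℰ) = ℰ at hK
    rw [← hK] at hE ⊢
    refine ⟨hD, fun f hf => ?_⟩
    obtain ⟨g, hg, hfg⟩ := hE.2 f hf
    exact ⟨g, hg, hfg.mono hDE⟩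
  · intro hered
    refine ⟨{g | Continuous g ∧ {x | g x = 0} ∈ ℰ}, fun g hg => hg.1, ?_⟩
    refine Subset.antisymm ?_ fun E hE => ⟨hℰ hE, fun f hf => hf.2 E hE⟩
    rintro E ⟨hEc, hE⟩
    obtain ⟨g, ⟨-, hg⟩, h0g⟩ := hE (fun _ => 0) ⟨continuous_const, fun D hD => by
      obtain ⟨g, hgc, hgD⟩ := exists_continuous_zero_set_eq (hℰ hD)
      refine ⟨g, ⟨hgc, hgD.symm ▸ hD⟩, fun x hx => ?_⟩
      rw [← hgD] at hx
      exact hx.symm⟩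
    exact hered E _ hEc (hℰ hg) (fun x hx => (h0g hx).symm) hg
end

section
/- Let I and J be non-degenerate, bounded, closed intervals of ℝ. For every n ∈ ℕ, let x_n be points of the interior of I, pairwise distinct, and let A_n ⊆ J be dense in J. Then there exists an increasing bijection f : I → J such that f(x_n) ∈ A_n for every n ∈ ℕ. -/
open Set

/-!
The map `f` is a small Lipschitz perturbation of the increasing affine bijection
`ℓ : [a, b] → [c, d]` of slope `s`. Let `φ n` be the distance to the finite set
`{a, b, x 0, …, x (n - 1)}`; it is `1`-Lipschitz, vanishes on that set, and is positive at `x n`.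
Put `f = ℓ + ∑ ε n • φ n` with `|ε n| ≤ s / 4 * (1 / 2) ^ n`. The perturbation is then
`s / 2`-Lipschitz and vanishes at `a` and `b`, so `f` is continuous and strictly increasing with
`f a = c` and `f b = d`.

Since `φ k (x n) = 0` for `k > n`, the value `f (x n)` depends only on `ε 0, …, ε n`. The
coefficients are chosen recursively: the `n`-th partial sum at `x n` lies in `[c, d]`, and because
`A n` is dense and `φ n (x n) > 0`, an arbitrarily small `ε n` moves this value into `A n`.
-/

/-- The distance to `{a, b, x 0, …, x (n - 1)}`. -/
noncomputable def bump (a b : ℝ) (x : ℕ → ℝ) (n : ℕ) (t : ℝ) : ℝ :=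
  Metric.infDist t ({a, b} ∪ Set.image x (Set.Iio n))

/-- The sequence determined recursively by `ε n = g n (p n + ∑ k < n, ε k * v k n)`. -/
noncomputable def coeff (g : ℕ → ℝ → ℝ) (p : ℕ → ℝ) (v : ℕ → ℕ → ℝ) (n : ℕ) : ℝ :=
  g n (p n + ∑ k : Fin n, coeff g p v k * v k n)
termination_by n
decreasing_by exact k.2

theorem coeff_eq (g : ℕ → ℝ → ℝ) (p : ℕ → ℝ) (v : ℕ → ℕ → ℝ) (n : ℕ) :
    coeff g p v n = g n (p n + ∑ k ∈ Finset.range n, coeff g p v k * v k n) := by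
  rw [coeff, Finset.sum_range (fun k => coeff g p v k * v k n)]

section bump

variable (a b : ℝ) (x : ℕ → ℝ) (n : ℕ)

theorem bump_nonneg (t : ℝ) : 0 ≤ bump a b x n t := Metric.infDist_nonneg

theorem bump_le_left (t : ℝ) : bump a b x n t ≤ |t - a| :=
  Metric.infDist_le_dist_of_mem (by simp)

theorem bump_le_right (t : ℝ) : bump a b x n t ≤ |t - b| :=
  Metric.infDist_le_dist_of_mem (by simp)

theorem bump_lipschitz (t u : ℝ) : |bump a b x n t - bump a b x n u| ≤ |t - u| := by
  have h := (Metric.lipschitz_infDist_pt ({a, b} ∪ Set.image x (Set.Iio n))).dist_le_mul t u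
  simpa [Real.dist_eq, bump] using h

theorem bump_eq_zero {m : ℕ} (h : m < n) : bump a b x n (x m) = 0 :=
  Metric.infDist_zero_of_mem (Or.inr ⟨m, h, rfl⟩)

theorem bump_pos (hx : x n ∈ Set.Ioo a b) (hinj : Function.Injective x) :
    0 < bump a b x n (x n) := by
  have hfin : ({a, b} ∪ Set.image x (Set.Iio n) : Set ℝ).Finite :=
    (Set.toFinite _).union ((Set.finite_Iio n).image x)
  refine (hfin.isClosed.notMem_iff_infDist_pos ⟨a, by simp⟩).1 ?_
  rintro ((h | h) | ⟨m, hm, h⟩)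
  · exact hx.1.ne' h
  · exact hx.2.ne h
  · exact (ne_of_lt hm) (hinj h)

end bump

theorem stmt_3 (a b c d : ℝ) (hab : a < b) (hcd : c < d)
    (x : ℕ → ℝ) (hx : ∀ n, x n ∈ Set.Ioo a b) (hinj : Function.Injective x)
    (A : ℕ → Set ℝ) (hA : ∀ n, A n ⊆ Set.Icc c d)
    (hdense : ∀ n, Set.Icc c d ⊆ closure (A n)) :
    ∃ f : ℝ → ℝ, StrictMonoOn f (Set.Icc a b) ∧
      Set.BijOn f (Set.Icc a b) (Set.Icc c d) ∧ ∀ n, f (x n) ∈ A n := by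
  obtain ⟨s, hs⟩ : ∃ s, s = (d - c) / (b - a) := ⟨_, rfl⟩
  have hs0 : 0 < s := hs ▸ div_pos (sub_pos.2 hcd) (sub_pos.2 hab)
  have hsd : s * (b - a) = d - c := by
    rw [hs]; exact div_mul_cancel₀ _ (sub_pos.2 hab).ne'
  let δ : ℕ → ℝ := fun n => s / 4 * (1 / 2) ^ n
  have hδ0 : ∀ n, 0 < δ n := fun n => by positivity
  have hδ : HasSum δ (s / 2) := by
    have h := hasSum_geometric_two.mul_left (s / 4)
    rwa [show s / 4 * 2 = s / 2 by ring] at h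
  -- the case split on `p ∈ Icc c d` makes the size bound on `e` unconditional
  have step : ∀ n p, ∃ e : ℝ, |e| ≤ δ n ∧
      (p ∈ Set.Icc c d → p + e * bump a b x n (x n) ∈ A n) := by
    intro n p
    by_cases hp : p ∈ Set.Icc c d
    · have hb := bump_pos a b x n (hx n) hinj
      obtain ⟨y, hy, hyp⟩ := Metric.mem_closure_iff.1 (hdense n hp) _ (mul_pos (hδ0 n) hb)
      refine ⟨(y - p) / bump a b x n (x n), ?_, fun _ => ?_⟩
      · rw [abs_div, abs_of_pos hb, div_le_iff₀ hb, abs_sub_comm]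
        exact hyp.le
      · rw [div_mul_cancel₀ _ hb.ne']
        simpa using hy
    · exact ⟨0, by simpa using (hδ0 n).le, fun h => absurd h hp⟩
  choose g hgδ hgA using step
  obtain ⟨ε, hε⟩ : ∃ ε : ℕ → ℝ, ∀ n, ε n = g n (c + s * (x n - a) +
      ∑ k ∈ Finset.range n, ε k * bump a b x k (x n)) :=
    ⟨_, coeff_eq g (fun n => c + s * (x n - a)) (fun k n => bump a b x k (x n))⟩
  have hεδ : ∀ n, |ε n| ≤ δ n := fun n => by rw [hε n]; exact hgδ _ _
  have hbound : ∀ n t r, bump a b x n t ≤ r → |ε n * bump a b x n t| ≤ δ n * r := by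
    intro n t r h
    rw [abs_mul, abs_of_nonneg (bump_nonneg a b x n t)]
    exact mul_le_mul (hεδ n) h (bump_nonneg a b x n t) (hδ0 n).le
  have hpart : ∀ n t r, 0 ≤ r → (∀ k, bump a b x k t ≤ r) →
      |∑ k ∈ Finset.range n, ε k * bump a b x k t| ≤ s / 2 * r := by
    intro n t r hr h
    calc _ ≤ ∑ k ∈ Finset.range n, |ε k * bump a b x k t| := Finset.abs_sum_le_sum_abs _ _
      _ ≤ ∑ k ∈ Finset.range n, δ k * r := Finset.sum_le_sum fun k _ => hbound k t r (h k)
      _ = (∑ k ∈ Finset.range n, δ k) * r := (Finset.sum_mul _ _ _).symm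
      _ ≤ s / 2 * r := mul_le_mul_of_nonneg_right
          (sum_le_hasSum _ (fun k _ => (hδ0 k).le) hδ) hr
  have hsum : ∀ t, Summable fun n => ε n * bump a b x n t := fun t =>
    Summable.of_norm_bounded (hδ.mul_right |t - a|).summable
      fun n => hbound n t _ (bump_le_left a b x n t)
  let h : ℝ → ℝ := fun t => ∑' n, ε n * bump a b x n t
  have hlip : ∀ t u, |h t - h u| ≤ s / 2 * |t - u| := by
    intro t u
    have e : h t - h u = ∑' n, (ε n * bump a b x n t - ε n * bump a b x n u) :=
      ((hsum t).tsum_sub (hsum u)).symm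
    rw [e, ← Real.norm_eq_abs]
    refine tsum_of_norm_bounded (hδ.mul_right |t - u|) fun n => ?_
    rw [← mul_sub, Real.norm_eq_abs, abs_mul]
    exact mul_le_mul (hεδ n) (bump_lipschitz a b x n t u) (abs_nonneg _) (hδ0 n).le
  have hha : h a = 0 := by
    have : ∀ n, bump a b x n a = 0 := fun n => Metric.infDist_zero_of_mem (by simp)
    simp [h, this]
  have hhb : h b = 0 := by
    have : ∀ n, bump a b x n b = 0 := fun n => Metric.infDist_zero_of_mem (by simp)
    simp [h, this]
  let f : ℝ → ℝ := fun t => c + s * (t - a) + h t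
  have hfa : f a = c := by simp [f, hha]
  have hfb : f b = d := by simp only [f, hhb]; linarith
  have hmono : StrictMono f := by
    intro t u htu
    have h1 := (abs_le.1 (hlip u t)).1
    rw [abs_of_pos (sub_pos.2 htu)] at h1
    have h2 := mul_pos hs0 (sub_pos.2 htu)
    simp only [f]
    nlinarith
  have hcont : Continuous f := by
    have : Continuous h := by
      refine (LipschitzWith.of_dist_le_mul (K := ⟨s / 2, by positivity⟩) ?_).continuous
      intro t u
      exact hlip t u
    fun_prop
  refine ⟨f, hmono.strictMonoOn _, ⟨fun t ht => ?_, hmono.injective.injOn, ?_⟩, fun n => ?_⟩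
  · exact ⟨hfa ▸ hmono.monotone ht.1, hfb ▸ hmono.monotone ht.2⟩
  · have := intermediate_value_Icc hab.le hcont.continuousOn
    rwa [hfa, hfb] at this
  · have hxa := sub_pos.2 (hx n).1
    have hxb := sub_pos.2 (hx n).2
    have e : h (x n) = ∑ k ∈ Finset.range (n + 1), ε k * bump a b x k (x n) := by
      refine tsum_eq_sum fun k hk => ?_
      rw [bump_eq_zero a b x k (by simpa using hk), mul_zero]
    have hmem := hgA n (c + s * (x n - a) + ∑ k ∈ Finset.range n, ε k * bump a b x k (x n)) ?_
    · rw [← hε n] at hmem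
      simp only [f]
      rwa [e, Finset.sum_range_succ, ← add_assoc]
    · -- each `bump` is at most the distance to either endpoint, which keeps the value in `[c, d]`
      have h1 := hpart n (x n) (x n - a) hxa.le fun k =>
        (bump_le_left a b x k _).trans (abs_of_pos hxa).le
      have h2 := hpart n (x n) (b - x n) hxb.le fun k =>
        (bump_le_right a b x k _).trans (by rw [abs_sub_comm, abs_of_pos hxb])
      have h3 := mul_pos hs0 hxa
      have h4 := mul_pos hs0 hxb
      constructor
      · linarith [(abs_le.1 h1).1]
      · linarith [(abs_le.1 h2).2]
end

section
/- Let ℰ ⊆ CL(ℝ) be a hereditary family of closed subsets of ℝ. Then there exists a family G ⊆ C(ℝ,ℝ) such that ℰ is the least element of K_G, i.e., ℰ = E_G(C(ℝ,ℝ)). -/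
/-!
Both the continuous functions and the closed sets number at most continuum many, so the family `G`
can be built by transfinite recursion along a well-order whose proper initial segments have fewer
than continuum many elements. There are two kinds of tasks. A pair `(f, E)` with `E ∈ ℰ` asks for a
member `f + t · u` of `G`, where `u` is continuous with zero set `E`; it agrees with `f` on `E`.
A closed set `D ∉ ℰ` asks for a constant function `c` that agrees on `D` with no member of `G`. Since `ℰ` is hereditary, `D ⊈ E`, so
at a point `x ∈ D \ E` the forbidden coincidence `c = f x + t · u x` with `u x ≠ 0`
determines `t` from `c` and `c` from `t`. Hence each earlier choice excludes at most one real number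
for the current one, and an admissible real always remains (`exists_avoiding`).
-/

open Set

open Cardinal

/-- Transfinite avoidance: if each value at `i` conflicts with at most one value at `j`, then on an
index set of size at most continuum real values can be chosen with no conflicts. -/
lemma exists_avoiding {I : Type} (hI : #I ≤ 𝔠) (P : I → I → ℝ → ℝ → Prop)
    (hsymm : ∀ i j s t, P i j s t → P j i t s)
    (hsub : ∀ i j s, {t | P i j s t}.Subsingleton) :
    ∃ r : I → ℝ, ∀ i j, i ≠ j → ¬ P i j (r i) (r j) := by
  classical
  obtain ⟨lt, wo, hlt⟩ := Cardinal.exists_ord_eq I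
  have hseg : ∀ i, #{j // lt j i} < 𝔠 := by
    intro i
    refine lt_of_lt_of_le ?_ hI
    have h := Ordinal.typein_lt_type lt i
    rw [← hlt, Cardinal.lt_ord] at h
    exact h
  have hex : ∀ i (p : ∀ j, lt j i → ℝ), ∃ t : ℝ, ∀ j (h : lt j i), ¬ P j i (p j h) t := by
    intro i p
    by_contra! hcon
    choose j hj hP using hcon
    have hinj : Function.Injective (fun t : ℝ => (⟨j t, hj t⟩ : {j // lt j i})) := by
      intro t u htu
      have hjj : j t = j u := congrArg Subtype.val htu
      have hp : p (j t) (hj t) = p (j u) (hj u) := by congr 1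
      have h1 := hP t
      rw [hp, hjj] at h1
      exact hsub _ _ _ h1 (hP u)
    have := Cardinal.mk_le_of_injective hinj
    rw [Cardinal.mk_real] at this
    exact absurd (hseg i) (not_lt.mpr this)
  choose step hstep using hex
  let r : I → ℝ := wo.wf.fix step
  have hr : ∀ i j, lt j i → ¬ P j i (r j) (r i) := by
    intro i j hji
    have h := hstep i (fun j _ => r j) j hji
    have e : r i = step i (fun j _ => r j) := wo.wf.fix_eq step i
    rwa [e]
  refine ⟨r, fun i j hij hP => ?_⟩
  rcases trichotomous_of lt i j with h | h | h
  · exact hr j i h hP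
  · exact hij h
  · exact hr i j h (hsymm _ _ _ _ hP)

lemma mk_continuousMap_real_le : #C(ℝ, ℝ) ≤ 𝔠 := by
  have hinj : Function.Injective (fun (f : C(ℝ, ℝ)) (q : ℚ) => f q) := by
    intro f g h
    ext x
    exact congrFun (Rat.isDenseEmbedding_coe_real.dense.equalizer f.continuous g.continuous h) x
  refine (Cardinal.mk_le_of_injective hinj).trans ?_
  simp only [Cardinal.mk_pi, Cardinal.prod_const, Cardinal.mk_real, Cardinal.mk_eq_aleph0 ℚ,
    Cardinal.lift_id, Cardinal.continuum_power_aleph0, le_refl]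

lemma mk_isClosed_real_le : #{E : Set ℝ // IsClosed E} ≤ 𝔠 := by
  -- A closed set is determined by the members of a countable basis that are disjoint from it.
  let B := TopologicalSpace.countableBasis ℝ
  have hB : TopologicalSpace.IsTopologicalBasis B := TopologicalSpace.isBasis_countableBasis ℝ
  have hinj : Function.Injective
      (fun (E : {E : Set ℝ // IsClosed E}) => {b : B | (b : Set ℝ) ⊆ E.1ᶜ}) := by
    have key : ∀ E F : {E : Set ℝ // IsClosed E},
        {b : B | (b : Set ℝ) ⊆ E.1ᶜ} = {b : B | (b : Set ℝ) ⊆ F.1ᶜ} → F.1 ⊆ E.1 := by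
      intro E F h x hxF
      by_contra hxE
      obtain ⟨b, hb, hxb, hbE⟩ := hB.exists_subset_of_mem_open hxE E.2.isOpen_compl
      have hm : (⟨b, hb⟩ : B) ∈ {b : B | (b : Set ℝ) ⊆ F.1ᶜ} := h ▸ hbE
      exact hm hxb hxF
    intro E F h
    exact Subtype.ext ((key F E h.symm).antisymm (key E F h))
  refine (Cardinal.mk_le_of_injective hinj).trans ?_
  rw [Cardinal.mk_set, ← Cardinal.two_power_aleph0]
  refine Cardinal.power_le_power_left two_ne_zero ?_
  exact (TopologicalSpace.countable_countableBasis ℝ).le_aleph0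

lemma exists_zero_set {E : Set ℝ} (hE : IsClosed E) : ∃ u : C(ℝ, ℝ), ∀ x, u x = 0 ↔ x ∈ E := by
  rcases E.eq_empty_or_nonempty with rfl | hne
  · exact ⟨1, fun x => by simp⟩
  · exact ⟨⟨fun x => Metric.infDist x E, Metric.continuous_infDist_pt E⟩,
      fun x => (hE.mem_iff_infDist_zero hne).symm⟩

theorem stmt_4 (ℰ : Set (Set ℝ)) (hℰ : ℰ ⊆ CLR)
    (hher : ∀ D E : Set ℝ, IsClosed D → D ⊆ E → E ∈ ℰ → D ∈ ℰ) :
    ∃ G ⊆ ContFun, ℰ = EG G ContFun ∧ IsLeast (KG G) ℰ := by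
  -- It is enough to realise `ℰ` as `EG G ContFun`: this is always the least element of `KG G`.
  suffices h : ∃ G ⊆ ContFun, ℰ = EG G ContFun by
    obtain ⟨G, hG, hE⟩ := h
    refine ⟨G, hG, hE, ?_, ?_⟩
    · have hF : FG G ℰ = ContFun := by
        refine Set.Subset.antisymm (fun f hf => hf.1) (fun f hf => ⟨hf, fun E hEm => ?_⟩)
        rw [hE] at hEm
        exact hEm.2 f hf
      show EG G (FG G ℰ) = ℰ
      rw [hF, ← hE]
    · intro ℰ' h' E hEm
      have h'' : EG G (FG G ℰ') = ℰ' := h'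
      rw [hE] at hEm
      rw [← h'']
      exact ⟨hEm.1, fun f hf => hEm.2 f hf.1⟩
  let CS := {E : Set ℝ // IsClosed E}
  choose u hu using fun E : CS => exists_zero_set E.2
  let A := C(ℝ, ℝ) × CS
  have hI : #(A ⊕ CS) ≤ 𝔠 := by
    rw [Cardinal.mk_sum, Cardinal.mk_prod]
    simp only [Cardinal.lift_id]
    exact Cardinal.add_le_of_le Cardinal.aleph0_le_continuum
      (Cardinal.mul_le_of_le Cardinal.aleph0_le_continuum mk_continuousMap_real_le
        mk_isClosed_real_le) mk_isClosed_real_le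
  -- The conflict between the member of `G` attached to `(f, E)` and the constant attached to `D`.
  -- All closed `E` and `D` are indexed; pairs with `D ⊆ E` carry no conflict.
  let Q : A → CS → ℝ → ℝ → Prop := fun a D t c =>
    ¬ D.1 ⊆ a.2.1 ∧ ∀ x ∈ D.1, c = a.1 x + t * u a.2 x
  let P : A ⊕ CS → A ⊕ CS → ℝ → ℝ → Prop := fun i j s t =>
    match i, j with
    | .inl a, .inr D => Q a D s t
    | .inr D, .inl a => Q a D t s
    | _, _ => False
  obtain ⟨r, hr⟩ := exists_avoiding hI P
    (by rintro (a | D) (b | D') s t h <;> exact h)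
    (by
      rintro (a | D) (b | D') s t ht t' ht'
      · exact ht.elim
      · obtain ⟨x, hx, -⟩ := Set.not_subset.mp ht.1
        rw [ht.2 x hx, ht'.2 x hx]
      · obtain ⟨x, hx, hxE⟩ := Set.not_subset.mp ht.1
        have hne : u b.2 x ≠ 0 := fun h => hxE ((hu _ _).mp h)
        have e := (ht.2 x hx).symm.trans (ht'.2 x hx)
        exact mul_right_cancel₀ hne (add_left_cancel e)
      · exact ht.elim)
  refine ⟨{g | ∃ a : A, a.2.1 ∈ ℰ ∧ g = fun x => a.1 x + r (.inl a) * u a.2 x}, ?_, ?_⟩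
  · rintro g ⟨a, -, rfl⟩
    exact a.1.continuous.add (continuous_const.mul (u a.2).continuous)
  · refine Set.Subset.antisymm (fun E hE => ⟨hℰ hE, fun f hf => ?_⟩) ?_
    · refine ⟨_, ⟨(⟨f, hf⟩, ⟨E, hℰ hE⟩), hE, rfl⟩, fun x hx => ?_⟩
      have h0 : u ⟨E, hℰ hE⟩ x = 0 := (hu _ _).mpr hx
      simp only [h0, mul_zero, add_zero]
      rfl
    · rintro D ⟨hD, hDf⟩
      by_contra hDE
      obtain ⟨g, ⟨a, ha, rfl⟩, hg⟩ := hDf (fun _ => r (.inr ⟨D, hD⟩)) continuous_const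
      exact hr (.inl a) (.inr ⟨D, hD⟩) Sum.inl_ne_inr
        ⟨fun hsub => hDE (hher D _ hD hsub ha), hg⟩
end

section
/- Let g ∈ C(ℝ,ℝ) and G = {g}. Then K_G = {CL(E) : E ∈ CL(ℝ)}, i.e., K_G consists exactly of the families of all closed subsets of a fixed closed set E, and L_G = {[g↾E] : E ∈ CL(ℝ)}, i.e., L_G consists exactly of the families of all continuous functions agreeing with g on a fixed closed set E. -/
/-!
For `G = {g}` the two polarities of the Galois connection are explicit. A continuous function agrees
with `g` on every member of `ℰ` iff it agrees with `g` on the closed set `closure (⋃₀ ℰ)`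
(`FG_singleton`), so every value of `FG {g}` is of the form `[g↾E]`; in particular
`FG {g} (CL(E)) = [g↾E]`. Conversely `EG {g} [g↾E] = CL(E)` for closed `E` (`EG_agree`): a Urysohn
function vanishing on `E` and equal to `1` at a point `x ∉ E`, added to `g`, is a member of
`[g↾E]` that differs from `g` at `x`. Both equalities of the theorem follow formally.
-/

open Set

theorem FG_singleton (g : ℝ → ℝ) (hg : Continuous g) (ℰ : Set (Set ℝ)) :
    FG {g} ℰ = {f | Continuous f ∧ Set.EqOn f g (closure (⋃₀ ℰ))} := by
  ext f
  simp only [FG, RG, ContFun, Set.mem_ofPred_eq, Set.mem_singleton_iff, exists_eq_left]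
  refine and_congr_right fun hf => ⟨fun h => ?_, fun h E hE => ?_⟩
  · refine Set.EqOn.closure (fun x hx => ?_) hf hg
    obtain ⟨E, hE, hxE⟩ := hx
    exact h E hE hxE
  · exact h.mono ((Set.subset_sUnion_of_mem hE).trans subset_closure)

theorem FG_closedSubsets (g : ℝ → ℝ) (hg : Continuous g) {E : Set ℝ} (hE : IsClosed E) :
    FG {g} {D | IsClosed D ∧ D ⊆ E} = {f | Continuous f ∧ Set.EqOn f g E} := by
  have hU : ⋃₀ {D | IsClosed D ∧ D ⊆ E} = E :=
    Set.Subset.antisymm (Set.sUnion_subset fun D hD => hD.2)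
      (Set.subset_sUnion_of_mem ⟨hE, Set.Subset.rfl⟩)
  rw [FG_singleton g hg, hU, hE.closure_eq]

theorem EG_agree (g : ℝ → ℝ) (hg : Continuous g) {E : Set ℝ} (hE : IsClosed E) :
    EG {g} {f | Continuous f ∧ Set.EqOn f g E} = {D | IsClosed D ∧ D ⊆ E} := by
  ext D
  simp only [EG, RG, CLR, Set.mem_ofPred_eq, Set.mem_singleton_iff, exists_eq_left]
  refine and_congr_right fun _ => ⟨fun h x hxD => ?_, fun h f hf => hf.2.mono h⟩
  by_contra hxE
  obtain ⟨u, hu0, hu1, -⟩ := exists_continuous_zero_one_of_isClosed hE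
    (isClosed_singleton (x := x)) (Set.disjoint_singleton_right.2 hxE)
  have hx := h (fun y => g y + u y) ⟨hg.add u.continuous, fun y hy => by simp [hu0 hy]⟩ hxD
  simp [hu1 (Set.mem_singleton x)] at hx

theorem stmt_6 (g : ℝ → ℝ) (hg : Continuous g) :
    KG {g} = {𝒜 | ∃ E ∈ CLR, 𝒜 = {D | IsClosed D ∧ D ⊆ E}} ∧
    LG {g} = {F | ∃ E ∈ CLR, F = {f | Continuous f ∧ Set.EqOn f g E}} := by
  constructor
  · ext ℰ
    constructor
    · intro h
      refine ⟨closure (⋃₀ ℰ), isClosed_closure, ?_⟩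
      rw [← EG_agree g hg isClosed_closure, ← FG_singleton g hg]
      exact Eq.symm h
    · rintro ⟨E, hE, rfl⟩
      change EG _ (FG _ _) = _
      rw [FG_closedSubsets g hg hE, EG_agree g hg hE]
  · ext F
    constructor
    · intro h
      refine ⟨closure (⋃₀ EG {g} F), isClosed_closure, ?_⟩
      rw [← FG_singleton g hg]
      exact Eq.symm h
    · rintro ⟨E, hE, rfl⟩
      change FG _ (EG _ _) = _
      rw [EG_agree g hg hE, FG_closedSubsets g hg hE]
end

section
/- Let G ⊆ C(ℝ,ℝ) be nonempty. The following are equivalent: (1) {CL(E) : E ∈ CL(ℝ)} ⊆ K_G; (2) the least element of K_G is {∅}, i.e., E_G(C(ℝ,ℝ)) = {∅}; (3) for each x ∈ ℝ, G[x] ≠ ℝ, where G[x] = {g(x) : g ∈ G}. -/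
/-!
Everything reduces to points. If `G[x] = ℝ`, then every continuous function agrees on `{x}` with a
member of `G`, so `{x} ∈ E_G(C(ℝ,ℝ))`. Conversely, if `G[x] ≠ ℝ` and `x` lies outside a closed set
`E`, a Urysohn function lets one modify a member of `G` off `E` so that its value at `x` leaves
`G[x]`; hence no closed set containing `x` belongs to `E_G(F_G(CL(E)))`. Finally `CL(∅) = {∅}` and
`F_G({∅}) = C(ℝ,ℝ)`, which relates the lattice condition to the least element.
-/

open Set

/-- The separation step: a member of `G` can be altered off `E` so as to avoid `G[x]` at `x`. -/
theorem exists_mem_FG_avoiding {G : Set (ℝ → ℝ)} (hG : G ⊆ ContFun) (hne : G.Nonempty)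
    {E : Set ℝ} (hE : IsClosed E) {x : ℝ} (hx : x ∉ E)
    (hGx : {y | ∃ g ∈ G, g x = y} ≠ Set.univ) :
    ∃ f ∈ FG G {D | IsClosed D ∧ D ⊆ E}, ∀ g ∈ G, g x ≠ f x := by
  obtain ⟨y, hy⟩ := (Set.ne_univ_iff_exists_notMem _).1 hGx
  obtain ⟨g₀, hg₀⟩ := hne
  obtain ⟨u, hu0, hu1, -⟩ := exists_continuous_zero_one_of_isClosed hE
    (isClosed_singleton (x := x)) (Set.disjoint_singleton_right.2 hx)
  have hc : Continuous g₀ := hG hg₀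
  refine ⟨fun t => g₀ t + (y - g₀ x) * u t, ⟨?_, ?_⟩, ?_⟩
  · show Continuous _
    fun_prop
  · rintro D ⟨-, hDE⟩
    refine ⟨g₀, hg₀, fun t ht => ?_⟩
    have h0 : u t = 0 := hu0 (hDE ht)
    simp [h0]
  · intro g hg h
    have h1 : u x = 1 := hu1 rfl
    exact hy ⟨g, hg, by simpa [h1] using h⟩

theorem stmt_7 (G : Set (ℝ → ℝ)) (hG : G ⊆ ContFun) (hne : G.Nonempty) :
    ((∀ E : Set ℝ, IsClosed E → {D | IsClosed D ∧ D ⊆ E} ∈ KG G) ↔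
      EG G ContFun = {(∅ : Set ℝ)}) ∧
    ((EG G ContFun = {(∅ : Set ℝ)}) ↔ ∀ x : ℝ, {y | ∃ g ∈ G, g x = y} ≠ Set.univ) := by
  have h12 : (∀ E : Set ℝ, IsClosed E → {D | IsClosed D ∧ D ⊆ E} ∈ KG G) →
      EG G ContFun = {(∅ : Set ℝ)} := by
    intro h
    have hCL : {D : Set ℝ | IsClosed D ∧ D ⊆ ∅} = {∅} := by
      ext D
      simp only [Set.mem_ofPred_eq, Set.subset_empty_iff, Set.mem_singleton_iff]
      exact ⟨fun hD => hD.2, fun hD => ⟨hD ▸ isClosed_empty, hD⟩⟩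
    have hF : FG G {∅} = ContFun := by
      obtain ⟨g, hg⟩ := hne
      ext f
      refine ⟨fun hf => hf.1, fun hf => ⟨hf, ?_⟩⟩
      rintro E rfl
      exact ⟨g, hg, Set.eqOn_empty _ _⟩
    have h0 : EG G (FG G _) = _ := h ∅ isClosed_empty
    rwa [hCL, hF] at h0
  have h23 : EG G ContFun = {(∅ : Set ℝ)} → ∀ x : ℝ, {y | ∃ g ∈ G, g x = y} ≠ Set.univ := by
    intro h x hx
    have hmem : ({x} : Set ℝ) ∈ EG G ContFun := by
      refine ⟨isClosed_singleton, fun f _ => ?_⟩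
      obtain ⟨g, hg, hgx⟩ : f x ∈ {y | ∃ g ∈ G, g x = y} := hx ▸ Set.mem_univ _
      exact ⟨g, hg, Set.eqOn_singleton.2 hgx.symm⟩
    rw [h] at hmem
    exact Set.singleton_ne_empty x hmem
  have h31 : (∀ x : ℝ, {y | ∃ g ∈ G, g x = y} ≠ Set.univ) →
      ∀ E : Set ℝ, IsClosed E → {D | IsClosed D ∧ D ⊆ E} ∈ KG G := by
    intro h E hE
    refine Set.Subset.antisymm ?_ fun D hD => ⟨hD.1, fun f hf => hf.2 D hD⟩
    rintro D ⟨hD, hDF⟩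
    refine ⟨hD, fun x hxD => ?_⟩
    by_contra hxE
    obtain ⟨f, hf, hfx⟩ := exists_mem_FG_avoiding hG hne hE hxE (h x)
    obtain ⟨g, hg, hfg⟩ := hDF f hf
    exact hfx g hg (hfg hxD).symm
  exact ⟨⟨h12, h31 ∘ h23⟩, h23, h12 ∘ h31⟩
end

section
/- Let G ⊆ C(ℝ,ℝ) be nonempty. The following are equivalent: (1) K_G ⊆ {CL(E) : E ∈ CL(ℝ)}; (2) there exist continuous functions h₁, h₂ : ℝ → ℝ* (ℝ* = ℝ ∪ {−∞, ∞} with its standard topology) such that G = {g ∈ C(ℝ,ℝ) : h₁(x) ≤ g(x) ≤ h₂(x) for all x ∈ ℝ}. -/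
/-!
Everything is read off from the vertical sections `S x = {g x : g ∈ G}`.

If `G` consists of the continuous functions between `h₁` and `h₂`, then a continuous `f` agrees with
a member of `G` on `E` as soon as `h₁ ≤ f ≤ h₂` on `E`, because the truncation
`max h₁ (min f h₂)` is real-valued and lies in `G`. Hence every family `E_G(F)` is `CL(E₀)` for
`E₀ = {x | h₁ x ≤ f x ≤ h₂ x for all f ∈ F}`.

Conversely, applying (1) to the family `E_G({f})` yields a closed set `E_f` such that `f` agrees with
a member of `G` on a closed `D` iff `D ⊆ E_f`; testing on singletons, `E_f = {x | f x ∈ S x}`. Thus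
this set is closed for each continuous `f`, and `f ∈ G` iff `f x ∈ S x` for all `x`. Interpolating
two members of `G` by an affine function and using the intermediate value theorem, sections are
convex. The upper envelope `sup S x` is lower semicontinuous as a supremum of continuous functions,
upper semicontinuous by closedness for constant `f`, and attained when finite, by closedness for
`f z = sup S z - |z - x|` near `x`. The lower envelope is treated by negation, and `G` is the set of
continuous functions between the two envelopes.
-/

open Set

open Topology Filter

/-- The properties of the sections `S x = {g x : g ∈ G}` that make the envelopes continuous. -/
structure GoodSections (S : ℝ → Set ℝ) : Prop where
  closed : ∀ f : ℝ → ℝ, Continuous f → IsClosed {x | f x ∈ S x}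
  conv : ∀ x, (S x).OrdConnected
  sel : ∀ x, ∀ y ∈ S x, ∃ g : ℝ → ℝ, Continuous g ∧ g x = y ∧ ∀ z, g z ∈ S z
  nonempty : ∀ x, (S x).Nonempty

/-- The upper envelope `x ↦ sup S x`, with values in the extended reals. -/
noncomputable def upperEnv (S : ℝ → Set ℝ) (x : ℝ) : EReal := sSup ((fun y : ℝ => (y : EReal)) '' S x)

lemma le_upperEnv {S : ℝ → Set ℝ} {x y : ℝ} (h : y ∈ S x) : (y : EReal) ≤ upperEnv S x :=
  le_sSup ⟨y, h, rfl⟩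

lemma exists_of_lt_upperEnv {S : ℝ → Set ℝ} {x : ℝ} {a : EReal} (h : a < upperEnv S x) :
    ∃ y ∈ S x, a < (y : EReal) := by
  obtain ⟨_, ⟨y, hy, rfl⟩, hlt⟩ := lt_sSup_iff.1 h
  exact ⟨y, hy, hlt⟩

lemma GoodSections.neg {S : ℝ → Set ℝ} (hS : GoodSections S) :
    GoodSections (fun x => {y | -y ∈ S x}) where
  closed f hf := hS.closed (fun x => -f x) hf.neg
  conv x := ⟨fun a ha b hb c hc =>
    (hS.conv x).out hb ha ⟨neg_le_neg hc.2, neg_le_neg hc.1⟩⟩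
  sel x y hy := by
    obtain ⟨g, hg, h1, h2⟩ := hS.sel x (-y) hy
    exact ⟨fun z => -g z, hg.neg, by simp [h1], fun z => by simpa using h2 z⟩
  nonempty x := by
    obtain ⟨y, hy⟩ := hS.nonempty x
    exact ⟨-y, by simpa using hy⟩

lemma GoodSections.continuous_upperEnv {S : ℝ → Set ℝ} (hS : GoodSections S) :
    Continuous (upperEnv S) := by
  refine continuous_iff_continuousAt.2 fun x => tendsto_order.2 ⟨fun a ha => ?_, fun c hc => ?_⟩
  · obtain ⟨y, hy, hlt⟩ := exists_of_lt_upperEnv ha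
    obtain ⟨g, hg, rfl, hgS⟩ := hS.sel x y hy
    have hg' : Continuous (fun z => (g z : EReal)) := continuous_coe_real_ereal.comp hg
    filter_upwards [hg'.continuousAt.eventually (lt_mem_nhds hlt)] with z hz
    exact hz.trans_le (le_upperEnv (hgS z))
  · obtain ⟨c', h1, h2⟩ := EReal.lt_iff_exists_real_btwn.1 hc
    obtain ⟨y, hy⟩ := hS.nonempty x
    obtain ⟨g, hg, rfl, hgS⟩ := hS.sel x y hy
    have hgc : g x < c' := by exact_mod_cast (le_upperEnv hy).trans_lt h1
    have hnot : x ∈ {z | c' ∈ S z}ᶜ := fun h => (le_upperEnv h).not_gt h1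
    have hopen := (hS.closed (fun _ => c') continuous_const).isOpen_compl.mem_nhds hnot
    filter_upwards [hopen, hg.continuousAt.eventually (gt_mem_nhds hgc)] with z hz hgz
    refine lt_of_le_of_lt (sSup_le ?_) h2
    rintro _ ⟨b, hb, rfl⟩
    -- a larger element of the section would force `c'` into it by convexity
    by_contra hcon
    have hcb : c' < b := EReal.coe_lt_coe_iff.1 (not_le.1 hcon)
    exact hz ((hS.conv z).out (hgS z) hb ⟨hgz.le, hcb.le⟩)

/-- A finite upper envelope is attained. -/
lemma GoodSections.mem_of_eq_upperEnv {S : ℝ → Set ℝ} (hS : GoodSections S) {x y : ℝ}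
    (h : (y : EReal) = upperEnv S x) : y ∈ S x := by
  by_contra hy
  obtain ⟨y₀, hy₀⟩ := hS.nonempty x
  obtain ⟨g, hg, rfl, hgS⟩ := hS.sel x y₀ hy₀
  have hlt : g x < y := lt_of_le_of_ne (by exact_mod_cast (h ▸ le_upperEnv hy₀))
    (fun e => hy (e ▸ hy₀))
  have hcont := hS.continuous_upperEnv
  -- the envelope truncated to `[y - 1, y + 1]`, hence real-valued
  let k : ℝ → EReal := fun z => max ((y - 1 : ℝ) : EReal) (min (upperEnv S z) ((y + 1 : ℝ) : EReal))
  have hk : Continuous k := continuous_const.max (hcont.min continuous_const)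
  have hkne : ∀ z, k z ≠ ⊤ ∧ k z ≠ ⊥ := fun z =>
    ⟨((max_lt (EReal.coe_lt_top _) ((min_le_right _ _).trans_lt (EReal.coe_lt_top _)))).ne,
      ((EReal.bot_lt_coe _).trans_le (le_max_left _ _)).ne'⟩
  have hkr : Continuous (fun z => (k z).toReal) :=
    continuous_iff_continuousAt.2 fun z =>
      (EReal.tendsto_toReal (hkne z).1 (hkne z).2).comp hk.continuousAt
  let f : ℝ → ℝ := fun z => (k z).toReal - |z - x|
  have hf : Continuous f := hkr.sub (by fun_prop)
  have hkx : k x = y := by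
    simp only [k, ← h]
    rw [min_eq_left (by exact_mod_cast (by linarith)), max_eq_right (by exact_mod_cast (by linarith))]
  have hfx : f x = y := by simp [f, hkx]
  have hopen := (hS.closed f hf).isOpen_compl.mem_nhds (x := x)
    (by simpa only [mem_compl_iff, mem_ofPred_eq, hfx] using hy)
  have hgf : ∀ᶠ z in 𝓝 x, g z < f z :=
    hg.continuousAt.eventually_lt hf.continuousAt (by rw [hfx]; exact hlt)
  have hl : ∀ᶠ z in 𝓝 x, ((y - 1 : ℝ) : EReal) < upperEnv S z :=
    hcont.continuousAt.eventually (lt_mem_nhds (by rw [← h]; exact_mod_cast (by linarith)))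
  have hall : ∀ᶠ z in 𝓝 x, z ∈ {z | f z ∈ S z}ᶜ ∧ g z < f z ∧
      ((y - 1 : ℝ) : EReal) < upperEnv S z := by
    filter_upwards [hopen, hgf, hl] with z h1 h2 h3 using ⟨h1, h2, h3⟩
  have hne : ∃ᶠ z in 𝓝[≠] x, z ≠ x :=
    (eventually_mem_nhdsWithin (a := x) (s := {x}ᶜ)).frequently
  obtain ⟨z, hzx, hz1, hz2, hz3⟩ := (hne.and_eventually (hall.filter_mono nhdsWithin_le_nhds)).exists
  have hfk : (f z : EReal) < upperEnv S z := by
    have h1 : f z < (k z).toReal := by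
      have := abs_pos.2 (sub_ne_zero.2 hzx)
      simp only [f]; linarith
    have h2 : ((k z).toReal : EReal) = k z := EReal.coe_toReal (hkne z).1 (hkne z).2
    have h3 : k z ≤ upperEnv S z := max_le hz3.le (min_le_left _ _)
    calc (f z : EReal) < ((k z).toReal : EReal) := by exact_mod_cast h1
      _ = k z := h2
      _ ≤ _ := h3
  obtain ⟨b, hb, hlt⟩ := exists_of_lt_upperEnv hfk
  exact hz1 ((hS.conv z).out (hgS z) hb ⟨hz2.le, by exact_mod_cast hlt.le⟩)

lemma GoodSections.le_upperEnv_iff {S : ℝ → Set ℝ} (hS : GoodSections S) {x y : ℝ} :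
    (y : EReal) ≤ upperEnv S x ↔ ∃ b ∈ S x, y ≤ b := by
  constructor
  · intro h
    rcases h.eq_or_lt with h | h
    · exact ⟨y, hS.mem_of_eq_upperEnv h, le_rfl⟩
    · obtain ⟨b, hb, hlt⟩ := exists_of_lt_upperEnv h
      exact ⟨b, hb, by exact_mod_cast hlt.le⟩
  · rintro ⟨b, hb, hle⟩
    exact le_trans (by exact_mod_cast hle) (le_upperEnv hb)

/-- Condition (1), tested on the families `E_G({f})`. -/
lemma exists_closed_of_KG {G : Set (ℝ → ℝ)}
    (h : KG G ⊆ {𝒜 | ∃ E ∈ CLR, 𝒜 = {D | IsClosed D ∧ D ⊆ E}}) {f : ℝ → ℝ} (hf : Continuous f) :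
    IsClosed {x | ∃ g ∈ G, g x = f x} ∧
      ∀ D, IsClosed D → (∀ x ∈ D, ∃ g ∈ G, g x = f x) → RG G f D := by
  have hmem : EG G {f} ∈ KG G := by
    refine Subset.antisymm (fun E hE => ⟨hE.1, ?_⟩) (fun E hE => ⟨hE.1, fun f' hf' => hf'.2 E hE⟩)
    rintro f' rfl
    exact hE.2 f' ⟨hf, fun E' hE' => hE'.2 f' rfl⟩
  obtain ⟨E, hE, heq⟩ := h hmem
  have key : ∀ D, IsClosed D → (RG G f D ↔ D ⊆ E) := by
    intro D hD
    have : D ∈ EG G {f} ↔ IsClosed D ∧ D ⊆ E := by rw [heq]; rfl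
    constructor
    · intro hR
      exact (this.1 ⟨hD, by rintro f' rfl; exact hR⟩).2
    · intro hR
      exact (this.2 ⟨hD, hR⟩).2 f rfl
  have hEx : ∀ x, (∃ g ∈ G, g x = f x) ↔ x ∈ E := by
    intro x
    rw [← singleton_subset_iff, ← key _ isClosed_singleton]
    simp [RG, eq_comm]
  have hset : {x | ∃ g ∈ G, g x = f x} = E := Set.ext hEx
  refine ⟨hset ▸ hE, fun D hD hx => (key D hD).2 fun x hxD => (hEx x).1 (hx x hxD)⟩

lemma goodSections_of_KG {G : Set (ℝ → ℝ)} (hG : G ⊆ ContFun) (hne : G.Nonempty)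
    (h : KG G ⊆ {𝒜 | ∃ E ∈ CLR, 𝒜 = {D | IsClosed D ∧ D ⊆ E}}) :
    GoodSections (fun x => {y | ∃ g ∈ G, g x = y}) where
  closed f hf := (exists_closed_of_KG h hf).1
  sel x y := by
    rintro ⟨g, hg, rfl⟩
    exact ⟨g, hG hg, rfl, fun z => ⟨g, hg, rfl⟩⟩
  nonempty x := by
    obtain ⟨g, hg⟩ := hne
    exact ⟨g x, g, hg, rfl⟩
  conv x := by
    refine ⟨?_⟩
    rintro _ ⟨g₁, hg₁, rfl⟩ _ ⟨g₂, hg₂, rfl⟩ y ⟨hy1, hy2⟩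
    by_contra hy
    have h1 : g₁ x < y := lt_of_le_of_ne hy1 fun e => hy ⟨g₁, hg₁, e⟩
    have hopen := (exists_closed_of_KG h (continuous_const (y := y))).1.isOpen_compl.mem_nhds
      (x := x) hy
    have hc₁ : Continuous g₁ := hG hg₁
    have hev : ∀ᶠ z in 𝓝 x, z ∈ {z | ∃ g ∈ G, g z = y}ᶜ ∧ g₁ z < y := by
      filter_upwards [hopen, hc₁.continuousAt.eventually (gt_mem_nhds h1)] with z hz hz'
        using ⟨hz, hz'⟩
    obtain ⟨ε, hε, hball⟩ := Metric.eventually_nhds_iff.1 hev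
    have ha : g₁ (x - ε / 2) < y := (hball (by simp [abs_of_pos hε]; linarith)).2
    -- a member of `G` through `(x - ε / 2, g₁ (x - ε / 2))` and `(x, g₂ x)` must cross level `y`
    let f : ℝ → ℝ := fun z => g₂ x + (x - z) / (ε / 2) * (g₁ (x - ε / 2) - g₂ x)
    have hf : Continuous f := by fun_prop
    have hfx : f x = g₂ x := by simp [f]
    have hfa : f (x - ε / 2) = g₁ (x - ε / 2) := by
      simp only [f]; field_simp; ring
    obtain ⟨g, hg, hgf⟩ := (exists_closed_of_KG h hf).2 {x - ε / 2, x} (Set.toFinite _).isClosed (by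
      rintro z (rfl | rfl)
      · exact ⟨g₁, hg₁, hfa.symm⟩
      · exact ⟨g₂, hg₂, hfx.symm⟩)
    have e1 : g (x - ε / 2) = g₁ (x - ε / 2) := by rw [← hgf (by simp), hfa]
    have e2 : g x = g₂ x := by rw [← hgf (by simp), hfx]
    have hgc : Continuous g := hG hg
    obtain ⟨z, hz, hzy⟩ := intermediate_value_Icc (by linarith : x - ε / 2 ≤ x) hgc.continuousOn
      (show y ∈ Icc _ _ from ⟨e1 ▸ ha.le, e2 ▸ hy2⟩)
    refine (hball (y := z) ?_).1 ⟨g, hg, hzy⟩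
    rw [Real.dist_eq, abs_lt]
    constructor <;> linarith [hz.1, hz.2]

theorem stmt_8 (G : Set (ℝ → ℝ)) (hG : G ⊆ ContFun) (hne : G.Nonempty) :
    (KG G ⊆ {𝒜 | ∃ E ∈ CLR, 𝒜 = {D | IsClosed D ∧ D ⊆ E}}) ↔
    (∃ h₁ h₂ : ℝ → EReal, Continuous h₁ ∧ Continuous h₂ ∧
      G = {g : ℝ → ℝ | Continuous g ∧ ∀ x, h₁ x ≤ (g x : EReal) ∧ (g x : EReal) ≤ h₂ x}) := by
  constructor
  · intro h
    have hS := goodSections_of_KG hG hne h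
    refine ⟨fun x => -upperEnv (fun x => {y | -y ∈ {y | ∃ g ∈ G, g x = y}}) x, upperEnv _,
      continuous_neg.comp hS.neg.continuous_upperEnv, hS.continuous_upperEnv, ?_⟩
    ext f
    constructor
    · intro hf
      refine ⟨hG hf, fun x => ⟨?_, le_upperEnv ⟨f, hf, rfl⟩⟩⟩
      rw [EReal.neg_le, ← EReal.coe_neg]
      exact le_upperEnv ⟨f, hf, (neg_neg _).symm⟩
    · rintro ⟨hf, hb⟩
      obtain ⟨g, hg, hfg⟩ := (exists_closed_of_KG h hf).2 univ isClosed_univ (fun x _ => by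
        obtain ⟨hb1, hb2⟩ := hb x
        rw [EReal.neg_le, ← EReal.coe_neg, hS.neg.le_upperEnv_iff] at hb1
        obtain ⟨a, ha, hle⟩ := hb1
        obtain ⟨b, hb, hle'⟩ := hS.le_upperEnv_iff.1 hb2
        exact (hS.conv x).out ha hb ⟨by linarith, hle'⟩)
      rwa [show f = g from funext fun x => hfg (mem_univ x)]
  · rintro ⟨h₁, h₂, hc₁, hc₂, hGeq⟩ ℰ hℰ
    obtain ⟨g₀, hg₀⟩ := hne
    rw [hGeq] at hg₀
    have hRG : ∀ f : ℝ → ℝ, Continuous f → ∀ E : Set ℝ,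
        (RG G f E ↔ ∀ x ∈ E, h₁ x ≤ (f x : EReal) ∧ (f x : EReal) ≤ h₂ x) := by
      intro f hf E
      constructor
      · rintro ⟨g, hg, hfg⟩ x hx
        rw [hGeq] at hg
        rw [hfg hx]
        exact hg.2 x
      · intro hb
        let k : ℝ → EReal := fun x => max (h₁ x) (min (f x : EReal) (h₂ x))
        have hk : Continuous k := hc₁.max ((continuous_coe_real_ereal.comp hf).min hc₂)
        have hkne : ∀ x, k x ≠ ⊤ ∧ k x ≠ ⊥ := fun x =>
          ⟨(max_lt ((hg₀.2 x).1.trans_lt (EReal.coe_lt_top _))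
            ((min_le_left _ _).trans_lt (EReal.coe_lt_top _))).ne,
          (lt_max_of_lt_right (lt_min (EReal.bot_lt_coe _)
            ((EReal.bot_lt_coe _).trans_le (hg₀.2 x).2))).ne'⟩
        have hkr : ∀ x, ((k x).toReal : EReal) = k x := fun x =>
          EReal.coe_toReal (hkne x).1 (hkne x).2
        refine ⟨fun x => (k x).toReal, ?_, fun x hx => ?_⟩
        · rw [hGeq]
          refine ⟨continuous_iff_continuousAt.2 fun z =>
            (EReal.tendsto_toReal (hkne z).1 (hkne z).2).comp hk.continuousAt, fun x => ?_⟩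
          rw [hkr]
          exact ⟨le_max_left _ _, max_le ((hg₀.2 x).1.trans (hg₀.2 x).2) (min_le_right _ _)⟩
        · have : k x = f x := by
            simp only [k]
            rw [min_eq_left (hb x hx).2, max_eq_right (hb x hx).1]
          simp [this]
    refine ⟨{x | ∀ f ∈ FG G ℰ, h₁ x ≤ (f x : EReal) ∧ (f x : EReal) ≤ h₂ x}, ?_, ?_⟩
    · simp only [CLR, mem_ofPred_eq, ofPred_forall]
      refine isClosed_iInter fun f => isClosed_iInter fun hf => ?_
      have hf' : Continuous (fun x => (f x : EReal)) := continuous_coe_real_ereal.comp hf.1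
      exact (isClosed_le hc₁ hf').inter (isClosed_le hf' hc₂)
    · have hℰ' : EG G (FG G ℰ) = ℰ := hℰ
      rw [← hℰ']
      ext D
      refine and_congr Iff.rfl ⟨fun hD x hx f hf => ?_, fun hD f hf => ?_⟩
      · rw [hℰ'] at hf
        exact (hRG f hf.1 D).1 (hD f hf) x hx
      · refine (hRG f hf.1 D).2 fun x hx => hD hx f (by rwa [hℰ'])
end

section
/- Let G ⊆ C(ℝ,ℝ). The following are equivalent: (1) K_G = {CL(E) : E ∈ CL(ℝ)}; (2) there exist continuous f, h : ℝ → ℝ* such that f(x) ≤ h(x) for all x, for every x ∈ ℝ at least one of f(x), h(x) is finite (i.e., f⁻¹[ℝ] ∪ h⁻¹[ℝ] = ℝ), and G = [f,h] = {g ∈ C(ℝ,ℝ) : f(x) ≤ g(x) ≤ h(x) for all x ∈ ℝ}. -/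
/-!
For `G = [f,h]`, clamping shows that a continuous `φ` agrees on a closed set `D` with a member of
`G` iff `f ≤ φ ≤ h` on `D`. So every `E_G(F)` has the form `CL(E)`; conversely `CL(E)` is a fixed
point because, one of `f x`, `h x` being finite, a bump added at `x ∉ E` to a member of `G` leaves
`[f,h]` at `x` without changing anything on `E`.

Conversely, assume `K_G = {CL(E)}`. Applied to the closed family generated by a single function `φ`,
this says (`Pointwise`) that agreement with `G` on closed sets is decided pointwise by the sections
`sect G x = {g x | g ∈ G}` and that `{x | φ x ∈ sect G x}` is closed. From this,
the sections are intervals (`Pointwise.ordConnected`, by the intermediate value theorem), their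
infimum and supremum are continuous in `x` (`Pointwise.continuous_lower`,
`Pointwise.continuous_upper`), and finite endpoints belong to the sections
(`Pointwise.mem_sect_of_between`), so `G` is the family of continuous functions between
the two envelopes. The fixed point `CL(∅)` shows that no section is all of `ℝ`, so that one endpoint
is finite.
-/

open Set

/-- The section at `x` of the union of the graphs of members of `G`. -/
def sect (G : Set (ℝ → ℝ)) (x : ℝ) : Set ℝ := {t | ∃ g ∈ G, g x = t}

/-- The consequence of `K_G = {CL(E) : E ∈ CL(ℝ)}` used throughout: whether a continuous `φ` agrees
on a closed set `D` with a member of `G` is decided pointwise on `D`, and the set of good points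
is closed. -/
def Pointwise (G : Set (ℝ → ℝ)) : Prop :=
  ∀ φ : ℝ → ℝ, Continuous φ → IsClosed {x | φ x ∈ sect G x} ∧
    ∀ D, IsClosed D → (∀ x ∈ D, φ x ∈ sect G x) → RG G φ D

/-! ### Consequences of the form of `K_G` -/

/-- `E_G(F)` is a fixed point of the Galois closure, for every `F` of continuous functions. -/
lemma EG_mem_KG (G F : Set (ℝ → ℝ)) (hF : F ⊆ ContFun) : EG G F ∈ KG G := by
  apply Set.Subset.antisymm
  · rintro E ⟨hE, h⟩
    exact ⟨hE, fun f hf => h f ⟨hF hf, fun D hD => hD.2 f hf⟩⟩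
  · rintro E hE
    exact ⟨hE.1, fun f hf => hf.2 E hE⟩

lemma pointwise_of_KG (G : Set (ℝ → ℝ))
    (h : KG G = {𝒜 | ∃ E ∈ CLR, 𝒜 = {D | IsClosed D ∧ D ⊆ E}}) : Pointwise G := by
  intro φ hφ
  have h1 : EG G {φ} ∈ KG G := EG_mem_KG G {φ} (by rintro _ rfl; exact hφ)
  rw [h] at h1
  obtain ⟨E, hE, h1⟩ := h1
  have key : ∀ D, IsClosed D → (RG G φ D ↔ D ⊆ E) := by
    intro D hD
    have h2 := Set.ext_iff.1 h1 D
    constructor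
    · intro h3
      exact (h2.1 ⟨hD, by rintro _ rfl; exact h3⟩).2
    · intro h3
      exact (h2.2 ⟨hD, h3⟩).2 φ rfl
  have hpt : ∀ x, φ x ∈ sect G x ↔ x ∈ E := by
    intro x
    rw [← Set.singleton_subset_iff (a := x), ← key _ isClosed_singleton]
    constructor
    · rintro ⟨g, hg, e⟩
      exact ⟨g, hg, by rintro _ rfl; exact e.symm⟩
    · rintro ⟨g, hg, e⟩
      exact ⟨g, hg, (e rfl).symm⟩
  refine ⟨?_, fun D hD hx => (key D hD).2 fun x hxD => (hpt x).1 (hx x hxD)⟩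
  simp only [hpt]
  exact hE

lemma sect_ne_univ_of_KG (G : Set (ℝ → ℝ))
    (h : KG G = {𝒜 | ∃ E ∈ CLR, 𝒜 = {D | IsClosed D ∧ D ⊆ E}}) (x : ℝ) :
    ∃ c, c ∉ sect G x := by
  have h1 : {D : Set ℝ | IsClosed D ∧ D ⊆ ∅} ∈ KG G := by
    rw [h]; exact ⟨∅, isClosed_empty, rfl⟩
  have h2 : ({x} : Set ℝ) ∉ EG G (FG G {D : Set ℝ | IsClosed D ∧ D ⊆ ∅}) := by
    rw [show EG G (FG G {D : Set ℝ | IsClosed D ∧ D ⊆ ∅}) = _ from h1]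
    simp
  by_contra! hc
  refine h2 ⟨isClosed_singleton, fun f hf => ?_⟩
  obtain ⟨g, hg, e⟩ := hc (f x)
  exact ⟨g, hg, by rintro _ rfl; exact e.symm⟩

namespace Pointwise

variable {G : Set (ℝ → ℝ)}

/-- `G` consists of the continuous selections of its own sections. -/
lemma mem (H : Pointwise G) {φ : ℝ → ℝ} (hφ : Continuous φ) (h : ∀ x, φ x ∈ sect G x) :
    φ ∈ G := by
  obtain ⟨g, hg, e⟩ := (H φ hφ).2 univ isClosed_univ fun x _ => h x
  rwa [show φ = g from funext fun x => e (mem_univ x)]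

lemma nonempty (H : Pointwise G) : G.Nonempty := by
  obtain ⟨g, hg, -⟩ := (H (fun _ => 0) continuous_const).2 ∅ isClosed_empty (by simp)
  exact ⟨g, hg⟩

/-- Members of `G` through two prescribed points over distinct abscissae. -/
lemma two_points (H : Pointwise G) {x y s t : ℝ} (hxy : x ≠ y) (hs : s ∈ sect G x)
    (ht : t ∈ sect G y) : ∃ g ∈ G, g x = s ∧ g y = t := by
  have hne : y - x ≠ 0 := sub_ne_zero.2 hxy.symm
  have e1 : s + (t - s) * ((x - x) / (y - x)) = s := by simp
  have e2 : s + (t - s) * ((y - x) / (y - x)) = t := by rw [div_self hne]; ring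
  obtain ⟨g, hg, e⟩ := (H (fun z => s + (t - s) * ((z - x) / (y - x))) (by fun_prop)).2 {x, y}
    (Set.toFinite _).isClosed (by
      rintro z (rfl | rfl)
      · simpa only [e1] using hs
      · simpa only [e2] using ht)
  refine ⟨g, hg, ?_, ?_⟩
  · exact (e (by simp)).symm.trans e1
  · exact (e (by simp)).symm.trans e2

/-- If `a < c < b` with `a, b` in the section at `x`, then members of `G` that climb from `a` at
`x` to a value above `c` at a point near `x` show that `c` lies in sections arbitrarily near `x`;
as `{z | c ∈ sect G z}` is closed, `c` is in the section at `x`. -/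
lemma ordConnected (hG : G ⊆ ContFun) (H : Pointwise G) {x a b c : ℝ} (ha : a ∈ sect G x)
    (hb : b ∈ sect G x) (hac : a ≤ c) (hcb : c ≤ b) : c ∈ sect G x := by
  rcases hac.eq_or_lt with rfl | hac
  · exact ha
  rcases hcb.eq_or_lt with rfl | hcb
  · exact hb
  have hcl := (H (fun _ => c) continuous_const).1
  change x ∈ {x | c ∈ sect G x}
  rw [← hcl.closure_eq, Metric.mem_closure_iff]
  intro ε hε
  obtain ⟨gb, hgb, rfl⟩ := hb
  have hcont : Continuous gb := hG hgb
  obtain ⟨δ, hδ, hd⟩ := Metric.eventually_nhds_iff.1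
    (hcont.continuousAt.eventually (lt_mem_nhds hcb))
  set y := x + min (δ / 2) (ε / 2) with hy
  have hm : 0 < min (δ / 2) (ε / 2) := by positivity
  have hxy : x < y := by linarith
  have hyc : c < gb y := by
    apply hd
    rw [Real.dist_eq, abs_of_pos (by linarith)]
    have := min_le_left (δ / 2) (ε / 2)
    linarith
  obtain ⟨g, hg, e1, e2⟩ := H.two_points hxy.ne ha ⟨gb, hgb, rfl⟩
  have hgc : Continuous g := hG hg
  obtain ⟨z, hz, e⟩ := intermediate_value_Icc hxy.le hgc.continuousOn
    (show c ∈ Icc (g x) (g y) by rw [e1, e2]; exact ⟨hac.le, hyc.le⟩)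
  refine ⟨z, ⟨g, hg, e⟩, ?_⟩
  rw [dist_comm, Real.dist_eq, abs_of_nonneg (by linarith [hz.1])]
  have := min_le_right (δ / 2) (ε / 2)
  linarith [hz.2]

/-- The upper envelope is lower semicontinuous as a supremum of continuous functions. For the
other half, a constant `c` above the envelope at `x` avoids the sections near `x`, and since these
are intervals containing a value below `c`, the envelope stays below `c` near `x`. -/
lemma continuous_upper (hG : G ⊆ ContFun) (H : Pointwise G) :
    Continuous fun x => ⨆ g ∈ G, (g x : EReal) := by
  rw [continuous_iff_lower_upperSemicontinuous]
  constructor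
  · refine lowerSemicontinuous_iSup fun g => lowerSemicontinuous_iSup fun hg => ?_
    have : Continuous g := hG hg
    exact (continuous_coe_real_ereal.comp this).lowerSemicontinuous
  · intro x d hd
    obtain ⟨c, hc, hcd⟩ := EReal.lt_iff_exists_real_btwn.1 hd
    have hcx : c ∉ sect G x := by
      rintro ⟨g, hg, rfl⟩
      exact absurd (le_iSup₂ (f := fun (g : ℝ → ℝ) (_ : g ∈ G) => (g x : EReal)) g hg)
        (not_le.2 hc)
    obtain ⟨g, hg⟩ := H.nonempty
    have hgc : Continuous g := hG hg
    have hgx : g x < c := by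
      rw [← EReal.coe_lt_coe_iff]
      exact (le_iSup₂ (f := fun (g : ℝ → ℝ) (_ : g ∈ G) => (g x : EReal)) g hg).trans_lt hc
    have h1 : ∀ᶠ y in nhds x, c ∉ sect G y :=
      (H (fun _ => c) continuous_const).1.isOpen_compl.mem_nhds hcx
    filter_upwards [h1, hgc.continuousAt.eventually (gt_mem_nhds hgx)] with y hy1 hy2
    refine lt_of_le_of_lt (iSup₂_le fun k hk => ?_) hcd
    rw [EReal.coe_le_coe_iff]
    by_contra! hlt
    exact hy1 (H.ordConnected hG ⟨g, hg, rfl⟩ ⟨k, hk, rfl⟩ hy2.le hlt.le)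

lemma continuous_lower (hG : G ⊆ ContFun) (H : Pointwise G) :
    Continuous fun x => ⨅ g ∈ G, (g x : EReal) := by
  rw [continuous_iff_lower_upperSemicontinuous]
  constructor
  · intro x d hd
    obtain ⟨c, hdc, hc⟩ := EReal.lt_iff_exists_real_btwn.1 hd
    have hcx : c ∉ sect G x := by
      rintro ⟨g, hg, rfl⟩
      exact absurd (iInf₂_le (f := fun (g : ℝ → ℝ) (_ : g ∈ G) => (g x : EReal)) g hg)
        (not_le.2 hc)
    obtain ⟨g, hg⟩ := H.nonempty
    have hgc : Continuous g := hG hg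
    have hgx : c < g x := by
      rw [← EReal.coe_lt_coe_iff]
      exact hc.trans_le (iInf₂_le (f := fun (g : ℝ → ℝ) (_ : g ∈ G) => (g x : EReal)) g hg)
    have h1 : ∀ᶠ y in nhds x, c ∉ sect G y :=
      (H (fun _ => c) continuous_const).1.isOpen_compl.mem_nhds hcx
    filter_upwards [h1, hgc.continuousAt.eventually (lt_mem_nhds hgx)] with y hy1 hy2
    refine lt_of_lt_of_le hdc (le_iInf₂ fun k hk => ?_)
    rw [EReal.coe_le_coe_iff]
    by_contra! hlt
    exact hy1 (H.ordConnected hG ⟨k, hk, rfl⟩ ⟨g, hg, rfl⟩ hlt.le hy2.le)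
  · refine upperSemicontinuous_iInf fun g => upperSemicontinuous_iInf fun hg => ?_
    have : Continuous g := hG hg
    exact (continuous_coe_real_ereal.comp this).upperSemicontinuous

lemma mem_sect_of_lt_upper (hG : G ⊆ ContFun) (H : Pointwise G) {x c : ℝ} {g : ℝ → ℝ}
    (hg : g ∈ G) (hgc : g x ≤ c) (hc : (c : EReal) < ⨆ g ∈ G, (g x : EReal)) :
    c ∈ sect G x := by
  simp only [lt_iSup_iff, EReal.coe_lt_coe_iff] at hc
  obtain ⟨k, hk, hlt⟩ := hc
  exact H.ordConnected hG ⟨g, hg, rfl⟩ ⟨k, hk, rfl⟩ hgc hlt.le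

lemma mem_sect_of_lower_lt (hG : G ⊆ ContFun) (H : Pointwise G) {x c : ℝ} {g : ℝ → ℝ}
    (hg : g ∈ G) (hgc : c ≤ g x) (hc : (⨅ g ∈ G, (g x : EReal)) < (c : EReal)) :
    c ∈ sect G x := by
  simp only [iInf_lt_iff, EReal.coe_lt_coe_iff] at hc
  obtain ⟨k, hk, hlt⟩ := hc
  exact H.ordConnected hG ⟨k, hk, rfl⟩ ⟨g, hg, rfl⟩ hlt.le hgc

/-- The sections contain their finite endpoints: pushing `φ` towards some `g ∈ G` everywhere except
at `x` gives a continuous function whose values lie in the sections off `x`, hence also at `x`. -/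
lemma mem_sect_of_between (hG : G ⊆ ContFun) (H : Pointwise G) {φ : ℝ → ℝ} (hφ : Continuous φ)
    (hl : ∀ x, (⨅ g ∈ G, (g x : EReal)) ≤ φ x) (hu : ∀ x, (φ x : EReal) ≤ ⨆ g ∈ G, (g x : EReal))
    (x : ℝ) : φ x ∈ sect G x := by
  obtain ⟨g, hg⟩ := H.nonempty
  have hgc : Continuous g := hG hg
  set ψ : ℝ → ℝ := fun y => φ y - min |y - x| 1 * (φ y - g y) with hψ
  have hcl := (H ψ (by fun_prop)).1
  have hoff : ({x}ᶜ : Set ℝ) ⊆ {y | ψ y ∈ sect G y} := by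
    intro y hy
    have hpos : 0 < min |y - x| 1 := lt_min (abs_pos.2 (sub_ne_zero.2 hy)) one_pos
    have hle : min |y - x| 1 ≤ 1 := min_le_right _ _
    change φ y - min |y - x| 1 * (φ y - g y) ∈ sect G y
    generalize min |y - x| 1 = m at hpos hle
    rcases lt_trichotomy (φ y) (g y) with hlt | heq | hlt
    · refine H.mem_sect_of_lower_lt hG hg ?_ ((hl y).trans_lt (EReal.coe_lt_coe_iff.2 ?_)) <;>
        nlinarith
    · exact ⟨g, hg, by rw [heq]; ring⟩
    · refine H.mem_sect_of_lt_upper hG hg ?_ ((EReal.coe_lt_coe_iff.2 ?_).trans_le (hu y)) <;>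
        nlinarith
  have hx : x ∈ {y | ψ y ∈ sect G y} := by
    apply hcl.closure_subset_iff.2 hoff
    rw [(dense_compl_singleton x).closure_eq]
    trivial
  simpa [hψ] using hx

end Pointwise

/-! ### Families of the form `[f,h]` -/

/-- Clamping a continuous real function between `f` and `h` gives a continuous real function as
soon as `f < ⊤` and `h > ⊥`. -/
lemma exists_clamp {f h : ℝ → EReal} (hf : Continuous f) (hh : Continuous h)
    (hle : ∀ x, f x ≤ h x) (hft : ∀ x, f x ≠ ⊤) (hhb : ∀ x, h x ≠ ⊥) {φ : ℝ → ℝ}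
    (hφ : Continuous φ) :
    ∃ g : ℝ → ℝ, Continuous g ∧ (∀ x, f x ≤ (g x : EReal) ∧ (g x : EReal) ≤ h x) ∧
      ∀ x, f x ≤ (φ x : EReal) → (φ x : EReal) ≤ h x → φ x = g x := by
  set k : ℝ → EReal := fun x => max (f x) (min (h x) (φ x)) with hk
  have hkc : Continuous k := hf.max (hh.min (continuous_coe_real_ereal.comp hφ))
  have hkt : ∀ x, k x ≠ ⊤ := fun x => ne_of_lt <|
    max_lt (lt_top_iff_ne_top.2 (hft x)) ((min_le_right _ _).trans_lt (EReal.coe_lt_top _))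
  have hkb : ∀ x, k x ≠ ⊥ := fun x => ne_of_gt <|
    (lt_min (bot_lt_iff_ne_bot.2 (hhb x)) (EReal.bot_lt_coe _)).trans_le (le_max_right _ _)
  have hcoe : ∀ x, ((k x).toReal : EReal) = k x := fun x => EReal.coe_toReal (hkt x) (hkb x)
  refine ⟨fun x => (k x).toReal, ?_, ?_, ?_⟩
  · rw [continuous_iff_continuousAt]
    intro x
    exact (EReal.tendsto_toReal (hkt x) (hkb x)).comp hkc.continuousAt
  · intro x
    simp only [hcoe]
    exact ⟨le_max_left _ _, max_le (hle x) (min_le_left _ _)⟩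
  · intro x h1 h2
    simp [hk, h1, h2]

lemma KG_of_interval {f h : ℝ → EReal} (hf : Continuous f) (hh : Continuous h)
    (hle : ∀ x, f x ≤ h x)
    (hfin : ∀ x, (∃ r : ℝ, f x = (r : EReal)) ∨ (∃ r : ℝ, h x = (r : EReal)))
    {G : Set (ℝ → ℝ)}
    (hG : G = {g : ℝ → ℝ | Continuous g ∧ ∀ x, f x ≤ (g x : EReal) ∧ (g x : EReal) ≤ h x}) :
    KG G = {𝒜 | ∃ E ∈ CLR, 𝒜 = {D | IsClosed D ∧ D ⊆ E}} := by
  have hft : ∀ x, f x ≠ ⊤ := by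
    intro x hx
    have h2 : h x = ⊤ := top_le_iff.1 (hx ▸ hle x)
    rcases hfin x with ⟨r, hr⟩ | ⟨r, hr⟩
    · simp [hr] at hx
    · simp [hr] at h2
  have hhb : ∀ x, h x ≠ ⊥ := by
    intro x hx
    have h2 : f x = ⊥ := le_bot_iff.1 (hx ▸ hle x)
    rcases hfin x with ⟨r, hr⟩ | ⟨r, hr⟩
    · simp [hr] at h2
    · simp [hr] at hx
  -- agreement with a member of `G` is the pointwise condition `f ≤ φ ≤ h`
  have key : ∀ φ : ℝ → ℝ, Continuous φ → ∀ D : Set ℝ,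
      (RG G φ D ↔ ∀ x ∈ D, f x ≤ (φ x : EReal) ∧ (φ x : EReal) ≤ h x) := by
    intro φ hφ D
    subst hG
    constructor
    · rintro ⟨g, hg, e⟩ x hx
      rw [e hx]
      exact hg.2 x
    · intro hD
      obtain ⟨g, hg, hgb, e⟩ := exists_clamp hf hh hle hft hhb hφ
      exact ⟨g, ⟨hg, hgb⟩, fun x hx => e x (hD x hx).1 (hD x hx).2⟩
  ext 𝒜
  constructor
  · intro hA
    refine ⟨⋂ φ ∈ FG G 𝒜, {x | f x ≤ (φ x : EReal) ∧ (φ x : EReal) ≤ h x}, ?_, ?_⟩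
    · refine isClosed_biInter fun φ hφ => ?_
      have hc : Continuous φ := hφ.1
      have hc' := continuous_coe_real_ereal.comp hc
      exact (isClosed_le hf hc').inter (isClosed_le hc' hh)
    · refine Eq.trans (show EG G (FG G 𝒜) = 𝒜 from hA).symm ?_
      ext D
      refine and_congr Iff.rfl ?_
      simp only [subset_iInter_iff]
      exact forall₂_congr fun φ hφ => key φ hφ.1 D
  · rintro ⟨E, hE, rfl⟩
    apply Set.Subset.antisymm
    · rintro D ⟨hD, hD2⟩
      refine ⟨hD, fun x hxD => ?_⟩
      by_contra hxE
      obtain ⟨g, hg, hgb, -⟩ := exists_clamp hf hh hle hft hhb (continuous_const (y := (0 : ℝ)))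
      obtain ⟨u, hu0, hu1, -⟩ := exists_continuous_zero_one_of_isClosed hE
        (isClosed_singleton (x := x)) (by simpa using hxE)
      -- add to `g` a multiple of a bump vanishing on `E`, so as to take the value `c` at `x`
      have bad : ∀ c : ℝ, f x ≤ (c : EReal) ∧ (c : EReal) ≤ h x := by
        intro c
        have hc : Continuous fun y => g y + (c - g x) * u y := by fun_prop
        have h1 : (fun y => g y + (c - g x) * u y) ∈ FG G {D | IsClosed D ∧ D ⊆ E} := by
          refine ⟨hc, fun D' hD' => (key _ hc D').2 fun y hy => ?_⟩
          have : u y = 0 := hu0 (hD'.2 hy)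
          simpa [this] using hgb y
        have h2 := (key _ hc D).1 (hD2 _ h1) x hxD
        have h3 : u x = 1 := hu1 rfl
        rwa [show g x + (c - g x) * u x = c by rw [h3]; ring] at h2
      rcases hfin x with ⟨r, hr⟩ | ⟨r, hr⟩
      · have := (bad (r - 1)).1
        rw [hr, EReal.coe_le_coe_iff] at this
        linarith
      · have := (bad (r + 1)).2
        rw [hr, EReal.coe_le_coe_iff] at this
        linarith
    · intro D hD
      exact ⟨hD.1, fun φ hφ => hφ.2 D hD⟩

theorem stmt_9 (G : Set (ℝ → ℝ)) (hG : G ⊆ ContFun) :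
    (KG G = {𝒜 | ∃ E ∈ CLR, 𝒜 = {D | IsClosed D ∧ D ⊆ E}}) ↔
    (∃ f h : ℝ → EReal, Continuous f ∧ Continuous h ∧ (∀ x, f x ≤ h x) ∧
      (∀ x, (∃ r : ℝ, f x = (r : EReal)) ∨ (∃ r : ℝ, h x = (r : EReal))) ∧
      G = {g : ℝ → ℝ | Continuous g ∧ ∀ x, f x ≤ (g x : EReal) ∧ (g x : EReal) ≤ h x}) := by
  constructor
  · intro hK
    have H := pointwise_of_KG G hK
    obtain ⟨g₀, hg₀⟩ := H.nonempty
    have hlow : ∀ g ∈ G, ∀ x, (⨅ g ∈ G, (g x : EReal)) ≤ (g x : EReal) := fun g hg x =>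
      iInf₂_le (f := fun (g : ℝ → ℝ) (_ : g ∈ G) => (g x : EReal)) g hg
    have hupp : ∀ g ∈ G, ∀ x, (g x : EReal) ≤ ⨆ g ∈ G, (g x : EReal) := fun g hg x =>
      le_iSup₂ (f := fun (g : ℝ → ℝ) (_ : g ∈ G) => (g x : EReal)) g hg
    refine ⟨fun x => ⨅ g ∈ G, (g x : EReal), fun x => ⨆ g ∈ G, (g x : EReal),
      H.continuous_lower hG, H.continuous_upper hG,
      fun x => (hlow g₀ hg₀ x).trans (hupp g₀ hg₀ x), fun x => ?_, ?_⟩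
    · obtain ⟨c, hc⟩ := sect_ne_univ_of_KG G hK x
      rcases le_total (g₀ x) c with hle | hle
      · have h1 : (⨆ g ∈ G, (g x : EReal)) ≤ c := not_lt.1 fun hlt =>
          hc (H.mem_sect_of_lt_upper hG hg₀ hle hlt)
        refine Or.inr ⟨_, (EReal.coe_toReal ?_ ?_).symm⟩
        · exact (h1.trans_lt (EReal.coe_lt_top c)).ne
        · exact ((EReal.bot_lt_coe _).trans_le (hupp g₀ hg₀ x)).ne'
      · have h1 : (c : EReal) ≤ ⨅ g ∈ G, (g x : EReal) := not_lt.1 fun hlt =>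
          hc (H.mem_sect_of_lower_lt hG hg₀ hle hlt)
        refine Or.inl ⟨_, (EReal.coe_toReal ?_ ?_).symm⟩
        · exact ((hlow g₀ hg₀ x).trans_lt (EReal.coe_lt_top _)).ne
        · exact ((EReal.bot_lt_coe c).trans_le h1).ne'
    · ext φ
      constructor
      · intro hφ
        exact ⟨hG hφ, fun x => ⟨hlow φ hφ x, hupp φ hφ x⟩⟩
      · rintro ⟨hφ, hb⟩
        exact H.mem hφ (H.mem_sect_of_between hG hφ (fun x => (hb x).1) fun x => (hb x).2)
  · rintro ⟨f, h, hf, hh, hle, hfin, hGeq⟩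
    exact KG_of_interval hf hh hle hfin hGeq
end

section
/- Let g ∈ C(ℝ,ℝ). Then K_{(−∞,g]} = K_{[g,∞)} = {CL(E) : E ∈ CL(ℝ)}, where (−∞,g] = {f ∈ C(ℝ,ℝ) : f(x) ≤ g(x) for all x} and [g,∞) = {f ∈ C(ℝ,ℝ) : g(x) ≤ f(x) for all x}. -/
/-!
A continuous `f` agrees on `E` with a continuous function below `g` exactly when `f ≤ g` on `E`
(take `min f g`), that is, when `E` is contained in the closed set `S f = {x | f x ≤ g x}`.
Every closed set has the form `S f`: add to `g` a nonnegative continuous function vanishing exactly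
on that set. Hence `E_G(F_G(ℰ))` consists of the closed subsets of the closure of `⋃ ℰ`, and the
fixed points of this operator are exactly the families `CL(E)` (`KG_eq_of_sublevel`). The case of
functions above `g` is symmetric, with `max` in place of `min`.
-/

open Set

/-- If `R_G` between continuous `f` and sets `E` is the inclusion `E ⊆ S f`, and the sets `S f` are
exactly the closed sets, then the fixed families are the families `CL(E)`. -/
theorem KG_eq_of_sublevel (G : Set (ℝ → ℝ)) (S : (ℝ → ℝ) → Set ℝ)
    (hR : ∀ f, Continuous f → ∀ E, RG G f E ↔ E ⊆ S f)
    (hS : ∀ f, Continuous f → IsClosed (S f))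
    (hex : ∀ E, IsClosed E → ∃ f, Continuous f ∧ S f = E) :
    KG G = {𝒜 | ∃ E ∈ CLR, 𝒜 = {D | IsClosed D ∧ D ⊆ E}} := by
  have key : ∀ ℰ : Set (Set ℝ),
      EG G (FG G ℰ) = {D | IsClosed D ∧ D ⊆ closure (⋃₀ ℰ)} := by
    intro ℰ
    ext D
    refine and_congr_right fun _ => ⟨fun h => ?_, fun h f hf => ?_⟩
    · obtain ⟨f, hf, hfS⟩ := hex (closure (⋃₀ ℰ)) isClosed_closure
      rw [← hfS]
      refine (hR f hf D).1 (h f ⟨hf, fun E hE => (hR f hf E).2 ?_⟩)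
      rw [hfS]
      exact (subset_sUnion_of_mem hE).trans subset_closure
    · refine (hR f hf.1 D).2 (h.trans (closure_minimal ?_ (hS f hf.1)))
      exact sUnion_subset fun E hE => (hR f hf.1 E).1 (hf.2 E hE)
  ext 𝒜
  constructor
  · intro h
    exact ⟨closure (⋃₀ 𝒜), isClosed_closure, (key 𝒜 ▸ h : _ = 𝒜).symm⟩
  · rintro ⟨E, hE, rfl⟩
    have hE' : IsClosed E := hE
    have hU : ⋃₀ {D | IsClosed D ∧ D ⊆ E} = E :=
      (sUnion_subset fun D hD => hD.2).antisymm (subset_sUnion_of_mem ⟨hE', Subset.rfl⟩)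
    change EG G (FG G _) = _
    rw [key, hU, hE'.closure_eq]

theorem exists_continuous_nonpos_iff_mem (E : Set ℝ) (hE : IsClosed E) :
    ∃ d : ℝ → ℝ, Continuous d ∧ ∀ x, d x ≤ 0 ↔ x ∈ E := by
  -- `Metric.infDist x ∅ = 0`, so the distance function fails for the empty set.
  rcases E.eq_empty_or_nonempty with rfl | hne
  · exact ⟨fun _ => 1, continuous_const, fun x => by simp⟩
  · refine ⟨fun x => Metric.infDist x E, Metric.continuous_infDist_pt E, fun x => ?_⟩
    rw [hE.mem_iff_infDist_zero hne]
    exact ⟨fun h => le_antisymm h Metric.infDist_nonneg, fun h => h.le⟩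

theorem stmt_10 (g : ℝ → ℝ) (hg : Continuous g) :
    KG {f | Continuous f ∧ ∀ x, f x ≤ g x} =
      {𝒜 | ∃ E ∈ CLR, 𝒜 = {D | IsClosed D ∧ D ⊆ E}} ∧
    KG {f | Continuous f ∧ ∀ x, g x ≤ f x} =
      {𝒜 | ∃ E ∈ CLR, 𝒜 = {D | IsClosed D ∧ D ⊆ E}} := by
  constructor
  · refine KG_eq_of_sublevel _ (fun f => {x | f x ≤ g x}) (fun f hf E => ⟨?_, fun h => ?_⟩)
      (fun f hf => isClosed_le hf hg) (fun E hE => ?_)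
    · rintro ⟨h, hh, heq⟩ x hx
      exact (heq hx).trans_le (hh.2 x)
    · exact ⟨fun x => min (f x) (g x), ⟨hf.min hg, fun x => min_le_right _ _⟩,
        fun x hx => (min_eq_left (h hx)).symm⟩
    · obtain ⟨d, hd, hdE⟩ := exists_continuous_nonpos_iff_mem E hE
      refine ⟨fun x => g x + d x, hg.add hd, ?_⟩
      ext x
      simp [← hdE]
  · refine KG_eq_of_sublevel _ (fun f => {x | g x ≤ f x}) (fun f hf E => ⟨?_, fun h => ?_⟩)
      (fun f hf => isClosed_le hg hf) (fun E hE => ?_)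
    · rintro ⟨h, hh, heq⟩ x hx
      exact (hh.2 x).trans_eq (heq hx).symm
    · exact ⟨fun x => max (f x) (g x), ⟨hf.max hg, fun x => le_max_right _ _⟩,
        fun x hx => (max_eq_left (h hx)).symm⟩
    · obtain ⟨d, hd, hdE⟩ := exists_continuous_nonpos_iff_mem E hE
      refine ⟨fun x => g x - d x, hg.sub hd, ?_⟩
      ext x
      simp [← hdE]
end

section
/- Let g ∈ C(ℝ,ℝ) and G = (g,∞) = {f ∈ C(ℝ,ℝ) : f(x) > g(x) for all x ∈ ℝ}. Then K_G = {CL(ℝ) ∩ P(X) : X ⊆ ℝ}, i.e., K_G consists exactly of the families of all closed subsets of ℝ contained in some fixed (not necessarily closed) set X ⊆ ℝ. -/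
/-!
For `G = (g, ∞)` and `E` closed, a continuous `f` agrees on `E` with a member of `G` iff `g < f`
on `E`: the function `g + |f - g| + dist(·, E)` is the required extension (`RG_iff`).
Hence `F_G(ℰ)` is the set of continuous `f` with `g < f` on `⋃₀ ℰ`. Testing against the functions
`y ↦ g y + |y - x|` for `x ∉ ⋃₀ ℰ` shows that `E_G(F_G(ℰ))` is the family of all closed subsets of
`⋃₀ ℰ` (`EG_FG_eq`). The theorem follows, since every `X` is the union of its closed subsets,
singletons being closed.
-/

open Set

lemma RG_iff {g f : ℝ → ℝ} (hg : Continuous g) (hf : Continuous f) {E : Set ℝ}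
    (hE : IsClosed E) :
    RG {f | Continuous f ∧ ∀ x, g x < f x} f E ↔ ∀ x ∈ E, g x < f x := by
  constructor
  · rintro ⟨h, ⟨-, hh⟩, heq⟩ x hx
    rw [heq hx]
    exact hh x
  · intro h
    -- `Metric.infDist x ∅ = 0`, so the empty set needs its own extension.
    rcases E.eq_empty_or_nonempty with rfl | hne
    · exact ⟨fun x => g x + 1, ⟨by fun_prop, fun x => by simp⟩, fun x hx => hx.elim⟩
    · refine ⟨fun x => g x + |f x - g x| + Metric.infDist x E, ⟨?_, fun x => ?_⟩, fun x hx => ?_⟩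
      · exact (hg.add (hf.sub hg).abs).add (Metric.continuous_infDist_pt E)
      · by_cases hx : x ∈ E
        · have h1 : 0 < |f x - g x| := abs_pos.2 (sub_pos.2 (h x hx)).ne'
          have h2 : 0 ≤ Metric.infDist x E := Metric.infDist_nonneg
          linarith
        · have h1 : 0 ≤ |f x - g x| := abs_nonneg _
          have h2 : 0 < Metric.infDist x E := (hE.notMem_iff_infDist_pos hne).1 hx
          linarith
      · have h1 : |f x - g x| = f x - g x := abs_of_pos (sub_pos.2 (h x hx))
        have h2 : Metric.infDist x E = 0 := Metric.infDist_zero_of_mem hx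
        simp only [h1, h2]
        ring

/-- The closure operator on families of closed sets sends `ℰ` to the closed subsets of `⋃₀ ℰ`. -/
lemma EG_FG_eq {g : ℝ → ℝ} (hg : Continuous g) {ℰ : Set (Set ℝ)} (hℰ : ∀ E ∈ ℰ, IsClosed E) :
    EG {f | Continuous f ∧ ∀ x, g x < f x} (FG {f | Continuous f ∧ ∀ x, g x < f x} ℰ) =
      {E | IsClosed E ∧ E ⊆ ⋃₀ ℰ} := by
  ext E
  constructor
  · rintro ⟨hE, h⟩
    refine ⟨hE, fun x hx => ?_⟩
    by_contra hxU
    have hc : Continuous fun y => g y + |y - x| := by fun_prop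
    have hmem : (fun y => g y + |y - x|) ∈ FG {f | Continuous f ∧ ∀ x, g x < f x} ℰ := by
      refine ⟨hc, fun D hD => (RG_iff hg hc (hℰ D hD)).2 fun y hy => ?_⟩
      have hyx : y ≠ x := by
        rintro rfl
        exact hxU ⟨D, hD, hy⟩
      have := abs_pos.2 (sub_ne_zero.2 hyx)
      linarith
    have := (RG_iff hg hc hE).1 (h _ hmem) x hx
    simp at this
  · rintro ⟨hE, hsub⟩
    refine ⟨hE, fun f hf => (RG_iff hg hf.1 hE).2 fun x hx => ?_⟩
    obtain ⟨D, hD, hxD⟩ := hsub hx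
    exact (RG_iff hg hf.1 (hℰ D hD)).1 (hf.2 D hD) x hxD

theorem stmt_11 (g : ℝ → ℝ) (hg : Continuous g) :
    KG {f | Continuous f ∧ ∀ x, g x < f x} =
      {𝒜 | ∃ X : Set ℝ, 𝒜 = {E | IsClosed E ∧ E ⊆ X}} := by
  ext ℰ
  constructor
  · intro h
    have h' : EG _ (FG _ ℰ) = ℰ := h
    have hℰ : ∀ E ∈ ℰ, IsClosed E := fun E hE => by
      rw [← h'] at hE
      exact hE.1
    exact ⟨⋃₀ ℰ, h'.symm.trans (EG_FG_eq hg hℰ)⟩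
  · rintro ⟨X, rfl⟩
    have hU : ⋃₀ {E : Set ℝ | IsClosed E ∧ E ⊆ X} = X := by
      apply Set.Subset.antisymm
      · exact Set.sUnion_subset fun E hE => hE.2
      · exact fun x hx => ⟨{x}, ⟨isClosed_singleton, Set.singleton_subset_iff.2 hx⟩, rfl⟩
    change EG _ (FG _ _) = _
    rw [EG_FG_eq hg fun E hE => hE.1, hU]
end

section
/- Let G ⊆ C(ℝ,ℝ) be nonempty. The following are equivalent: (1) {CL(ℝ) ∩ P(X) : X ⊆ ℝ} ⊆ K_G; (2) {A_x : x ∈ ℝ} ⊆ K_G, where A_x = {E ∈ CL(ℝ) : x ∉ E}; (3) for every x ∈ ℝ there exists f ∈ C(ℝ,ℝ) such that E_G({f}) = A_x. -/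
/-!
`E_G` and `F_G` form a Galois connection, so `K_G` consists of the families `E_G(F)` with `F` a
set of continuous functions, and for a family of closed sets only the inclusion
`E_G(F_G(ℰ)) ⊆ ℰ` is at stake.

* The closed subsets of `X` form the intersection of the `A_x` with `x ∉ X`, and Galois-closed
  families are stable under intersection; conversely `A_x` is the case `X = ℝ \ {x}`.
* If `A_x` is Galois-closed, then since `{x} ∉ A_x` some `f ∈ F_G(A_x)` agrees with no member of
  `G` at `x`. Such an `f` agrees with no member of `G` on any set containing `x`, so
  `E_G({f}) = A_x`.
-/

open Set

/-- The family `A_x` of closed sets not containing `x`. -/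
def Ax (x : ℝ) : Set (Set ℝ) := {E | IsClosed E ∧ x ∉ E}

theorem mem_KG_of_subset {G : Set (ℝ → ℝ)} {ℰ : Set (Set ℝ)} (hcl : ∀ E ∈ ℰ, IsClosed E)
    (h : EG G (FG G ℰ) ⊆ ℰ) : ℰ ∈ KG G :=
  Subset.antisymm h fun E hE => ⟨hcl E hE, fun _ hf => hf.2 E hE⟩

theorem EG_FG_mono {G : Set (ℝ → ℝ)} {ℰ ℰ' : Set (Set ℝ)} (h : ℰ ⊆ ℰ') :
    EG G (FG G ℰ) ⊆ EG G (FG G ℰ') :=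
  fun _ hE => ⟨hE.1, fun f hf => hE.2 f ⟨hf.1, fun E' hE' => hf.2 E' (h hE')⟩⟩

theorem stmt_12 (G : Set (ℝ → ℝ)) (hG : G ⊆ ContFun) (hne : G.Nonempty) :
    ((∀ X : Set ℝ, {E | IsClosed E ∧ E ⊆ X} ∈ KG G) ↔ (∀ x : ℝ, Ax x ∈ KG G)) ∧
    ((∀ x : ℝ, Ax x ∈ KG G) ↔
      (∀ x : ℝ, ∃ f : ℝ → ℝ, Continuous f ∧ EG G {f} = Ax x)) := by
  refine ⟨⟨fun h x => ?_, fun h X => ?_⟩, ⟨fun h x => ?_, fun h x => ?_⟩⟩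
  · have hx := h {x}ᶜ
    simp only [subset_compl_singleton_iff] at hx
    exact hx
  · refine mem_KG_of_subset (fun E hE => hE.1) fun E hE => ⟨hE.1, fun y hy => ?_⟩
    by_contra hyX
    have hsub : {E | IsClosed E ∧ E ⊆ X} ⊆ Ax y := fun E' hE' => ⟨hE'.1, fun hy' => hyX (hE'.2 hy')⟩
    have hE' : E ∈ EG G (FG G (Ax y)) := EG_FG_mono hsub hE
    rw [show EG G (FG G (Ax y)) = Ax y from h y] at hE'
    exact hE'.2 hy
  · have hx : EG G (FG G (Ax x)) = Ax x := h x
    have hnot : ({x} : Set ℝ) ∉ EG G (FG G (Ax x)) := by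
      rw [hx]
      exact fun hmem => hmem.2 rfl
    obtain ⟨f, hf, hfx⟩ : ∃ f ∈ FG G (Ax x), ¬ RG G f {x} := by
      by_contra! hall
      exact hnot ⟨isClosed_singleton, hall⟩
    refine ⟨f, hf.1, Subset.antisymm (fun E hE => ⟨hE.1, fun hxE => hfx ?_⟩) fun E hE => ⟨hE.1, ?_⟩⟩
    · obtain ⟨g, hg, hfg⟩ := hE.2 f rfl
      exact ⟨g, hg, hfg.mono (singleton_subset_iff.2 hxE)⟩
    · rintro _ rfl
      exact hf.2 E hE
  · obtain ⟨f, hf, hfx⟩ := h x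
    refine mem_KG_of_subset (fun E hE => hE.1) fun E hE => ?_
    rw [← hfx] at hE ⊢
    refine ⟨hE.1, ?_⟩
    rintro _ rfl
    exact hE.2 _ ⟨hf, fun E' hE' => hE'.2 _ rfl⟩
end

section
/- Let a < b be reals and let H ⊆ ℝ² be a functionally connected set such that [a,b] is contained in the projection of H to the first coordinate. Let h : [a,b] → ℝ be a continuous function whose graph is included in H, and let u, v ∈ ℝ be such that (a,u) ∈ H and (b,v) ∈ H. Then for every open interval J with u, v ∈ J and range(h) ⊆ J, there exists a continuous function g : [a,b] → J whose graph is included in H and with g(a) = u and g(b) = v. -/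
/-!
Near `a` the graph of `h` can be reached from `(a, u)` without leaving `J`. Let `f` be a continuous
function with graph in `H` joining `(a, u)` to `(b, v)`; by continuity `f` stays in `J` on some
`[a, c]`. Let `k` be a continuous function with graph in `H` joining `(a, u)` to `(c, h c)`. It may
leave `J`, but if `h a ≤ u` then `max h (min f k)` is selected pointwise from `h`, `f`, `k` (so its
graph is in `H`), lies between `h` and `max h f` (so its values are in `J`), equals `u` at `a` and
`h c` at `c`; if `u ≤ h a`, exchange `max` and `min`. This is `exists_merge`. The same is done near
`b`, on some `[d, b]` with `c ≤ d`, and the two pieces are glued to `h` on `[c, d]`.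
-/

open Set

/-- A set `H ⊆ ℝ²` is functionally connected if any two of its points with distinct first
coordinates are joined by the graph of a continuous function included in `H`. -/
def FunConn (H : Set (ℝ × ℝ)) : Prop :=
  ∀ x₁ y₁ x₂ y₂ : ℝ, (x₁, y₁) ∈ H → (x₂, y₂) ∈ H → x₁ < x₂ →
    ∃ h : ℝ → ℝ, ContinuousOn h (Set.Icc x₁ x₂) ∧ h x₁ = y₁ ∧ h x₂ = y₂ ∧
      ∀ x ∈ Set.Icc x₁ x₂, (x, h x) ∈ H

/-- If `f` and `h` run inside `J` and `k`, which need not, agrees with `f` at `p` and with `h` at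
`q`, then some lattice combination of the three runs inside `J` and passes from `f` to `h`.
The points `p`, `q` are not ordered, so that this applies at both ends of an interval. -/
lemma exists_merge {H : Set (ℝ × ℝ)} {J : Set ℝ} (hJ : J.OrdConnected) {s : Set ℝ} {p q : ℝ}
    {f h k : ℝ → ℝ} (hf : ContinuousOn f s) (hh : ContinuousOn h s) (hk : ContinuousOn k s)
    (hfH : ∀ x ∈ s, (x, f x) ∈ H) (hhH : ∀ x ∈ s, (x, h x) ∈ H) (hkH : ∀ x ∈ s, (x, k x) ∈ H)
    (hfJ : ∀ x ∈ s, f x ∈ J) (hhJ : ∀ x ∈ s, h x ∈ J) (hp : k p = f p) (hq : k q = h q) :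
    ∃ g : ℝ → ℝ, ContinuousOn g s ∧ g p = f p ∧ g q = h q ∧
      ∀ x ∈ s, g x ∈ J ∧ (x, g x) ∈ H := by
  rcases le_total (h p) (f p) with hle | hle
  · refine ⟨fun x => max (h x) (min (f x) (k x)), by fun_prop, ?_, ?_, fun x hx => ⟨?_, ?_⟩⟩
    · simp [hp, hle]
    · simp [hq]
    · have hm : max (h x) (f x) ∈ J := by
        rcases max_choice (h x) (f x) with e | e <;> rw [e]
        exacts [hhJ x hx, hfJ x hx]
      exact hJ.out (hhJ x hx) hm ⟨le_max_left _ _, max_le_max le_rfl (min_le_left _ _)⟩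
    · show (x, max (h x) (min (f x) (k x))) ∈ H
      rcases max_choice (h x) (min (f x) (k x)) with e | e <;> rw [e]
      · exact hhH x hx
      · rcases min_choice (f x) (k x) with e | e <;> rw [e]
        exacts [hfH x hx, hkH x hx]
  · refine ⟨fun x => min (h x) (max (f x) (k x)), by fun_prop, ?_, ?_, fun x hx => ⟨?_, ?_⟩⟩
    · simp [hp, hle]
    · simp [hq]
    · have hm : min (h x) (f x) ∈ J := by
        rcases min_choice (h x) (f x) with e | e <;> rw [e]
        exacts [hhJ x hx, hfJ x hx]
      exact hJ.out hm (hhJ x hx) ⟨min_le_min le_rfl (le_max_left _ _), min_le_left _ _⟩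
    · show (x, min (h x) (max (f x) (k x))) ∈ H
      rcases min_choice (h x) (max (f x) (k x)) with e | e <;> rw [e]
      · exact hhH x hx
      · rcases max_choice (f x) (k x) with e | e <;> rw [e]
        exacts [hfH x hx, hkH x hx]

lemma exists_glue {P : ℝ → ℝ → Prop} {a c b : ℝ} (hac : a ≤ c) (hcb : c ≤ b) {f g : ℝ → ℝ}
    (hf : ContinuousOn f (Icc a c)) (hg : ContinuousOn g (Icc c b)) (hc : f c = g c)
    (hfP : ∀ x ∈ Icc a c, P x (f x)) (hgP : ∀ x ∈ Icc c b, P x (g x)) :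
    ∃ k : ℝ → ℝ, ContinuousOn k (Icc a b) ∧ k a = f a ∧ k b = g b ∧
      ∀ x ∈ Icc a b, P x (k x) := by
  have ef : EqOn (fun x => if x ≤ c then f x else g x) f (Icc a c) := fun x hx => if_pos hx.2
  have eg : EqOn (fun x => if x ≤ c then f x else g x) g (Icc c b) := by
    intro x hx
    rcases hx.1.eq_or_lt with rfl | hlt
    · simp [hc]
    · exact if_neg hlt.not_ge
  refine ⟨fun x => if x ≤ c then f x else g x, ?_, ef (left_mem_Icc.2 hac),
    eg (right_mem_Icc.2 hcb), fun x hx => ?_⟩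
  · rw [← Icc_union_Icc_eq_Icc hac hcb]
    exact (hf.congr ef).union_of_isClosed (hg.congr eg) isClosed_Icc isClosed_Icc
  · rcases le_total x c with hxc | hxc
    · have e := ef ⟨hx.1, hxc⟩
      rw [e]
      exact hfP x ⟨hx.1, hxc⟩
    · have e := eg ⟨hxc, hx.2⟩
      rw [e]
      exact hgP x ⟨hxc, hx.2⟩

theorem stmt_13 (a b u v : ℝ) (hab : a < b) (H : Set (ℝ × ℝ)) (hH : FunConn H)
    (hproj : Set.Icc a b ⊆ Prod.fst '' H)
    (h : ℝ → ℝ) (hcont : ContinuousOn h (Set.Icc a b))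
    (hgraph : ∀ x ∈ Set.Icc a b, (x, h x) ∈ H)
    (hu : (a, u) ∈ H) (hv : (b, v) ∈ H)
    (J : Set ℝ) (hJopen : IsOpen J) (hJconn : J.OrdConnected)
    (huJ : u ∈ J) (hvJ : v ∈ J) (hhJ : ∀ x ∈ Set.Icc a b, h x ∈ J) :
    ∃ g : ℝ → ℝ, ContinuousOn g (Set.Icc a b) ∧ g a = u ∧ g b = v ∧
      ∀ x ∈ Set.Icc a b, g x ∈ J ∧ (x, g x) ∈ H := by
  obtain ⟨f, hf, hfa, hfb, hfH⟩ := hH a u b v hu hv hab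
  obtain ⟨m, ham, hmb⟩ := exists_between hab
  -- `f` stays in `J` on `[a, c]` and on `[d, b]`; `m` separates the two intervals.
  obtain ⟨c, hc, hcJ⟩ : ∃ c ∈ Ioc a m, Icc a c ⊆ f ⁻¹' J := by
    have h1 : f ⁻¹' J ∈ nhdsWithin a (Ici a) := by
      rw [← nhdsWithin_Icc_eq_nhdsGE hab]
      exact hf a (left_mem_Icc.2 hab.le) (hJopen.mem_nhds (hfa ▸ huJ))
    obtain ⟨e, he, hs⟩ := mem_nhdsGE_iff_exists_Icc_subset.1 h1
    exact ⟨min e m, ⟨lt_min he ham, min_le_right _ _⟩,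
      (Icc_subset_Icc_right (min_le_left _ _)).trans hs⟩
  obtain ⟨d, hd, hdJ⟩ : ∃ d ∈ Ico m b, Icc d b ⊆ f ⁻¹' J := by
    have h1 : f ⁻¹' J ∈ nhdsWithin b (Iic b) := by
      rw [← nhdsWithin_Icc_eq_nhdsLE hab]
      exact hf b (right_mem_Icc.2 hab.le) (hJopen.mem_nhds (hfb ▸ hvJ))
    obtain ⟨e, he, hs⟩ := mem_nhdsLE_iff_exists_Icc_subset.1 h1
    exact ⟨max e m, ⟨le_max_right _ _, max_lt he hmb⟩,
      (Icc_subset_Icc_left (le_max_left _ _)).trans hs⟩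
  have hcd : c ≤ d := hc.2.trans hd.1
  have sL : Icc a c ⊆ Icc a b := Icc_subset_Icc_right (hc.2.trans hmb.le)
  have sR : Icc d b ⊆ Icc a b := Icc_subset_Icc_left (ham.le.trans hd.1)
  have sM : Icc c d ⊆ Icc a b := Icc_subset_Icc hc.1.le hd.2.le
  obtain ⟨k, hk, hka, hkc, hkH⟩ :=
    hH a u c (h c) hu (hgraph c (sL (right_mem_Icc.2 hc.1.le))) hc.1
  obtain ⟨l, hl, hld, hlb, hlH⟩ :=
    hH d (h d) b v (hgraph d (sR (left_mem_Icc.2 hd.2.le))) hv hd.2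
  obtain ⟨gL, gLc, gLa, gLq, gLP⟩ := exists_merge hJconn (hf.mono sL) (hcont.mono sL) hk
    (fun x hx => hfH x (sL hx)) (fun x hx => hgraph x (sL hx)) hkH (fun x hx => hcJ hx)
    (fun x hx => hhJ x (sL hx)) (hka.trans hfa.symm) hkc
  obtain ⟨gR, gRc, gRb, gRq, gRP⟩ := exists_merge hJconn (hf.mono sR) (hcont.mono sR) hl
    (fun x hx => hfH x (sR hx)) (fun x hx => hgraph x (sR hx)) hlH (fun x hx => hdJ hx)
    (fun x hx => hhJ x (sR hx)) (hlb.trans hfb.symm) hld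
  obtain ⟨g₁, g₁c, g₁a, g₁d, g₁P⟩ := exists_glue (P := fun x y => y ∈ J ∧ (x, y) ∈ H)
    hc.1.le hcd gLc (hcont.mono sM) gLq gLP
    (fun x hx => ⟨hhJ x (sM hx), hgraph x (sM hx)⟩)
  obtain ⟨g, gc, ga, gb, gP⟩ := exists_glue (P := fun x y => y ∈ J ∧ (x, y) ∈ H)
    (hc.1.le.trans hcd) hd.2.le g₁c gRc (g₁d.trans gRq.symm) g₁P gRP
  exact ⟨g, gc, by rw [ga, g₁a, gLa, hfa], by rw [gb, gRb, hfb], gP⟩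
end

section
/- Let H ⊆ ℝ² be a functionally connected set whose projection to the first coordinate is all of ℝ. Then for every continuous f : ℝ → ℝ and every closed set E ⊆ ℝ such that the graph of f restricted to E is included in H (i.e., (x, f(x)) ∈ H for all x ∈ E), there exists a continuous g : ℝ → ℝ such that g agrees with f on E and the graph of g is included in H. -/
/-!
The function `g` keeps the values of `f` on `E` and follows, over each gap `(a, b)` of `E`, a path
in `H` from `(a, f a)` to `(b, f b)`. Continuity at the points of `E` requires the paths over short
gaps to have small oscillation, and the content of the proof is that such paths exist.

The tool is the median. If `j`, `h`, `k` are continuous with graphs in `H`, then so is their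
pointwise median, which moreover lies between `j` and `h`; if `k` agrees with `j` at the left end
and with `h` at the right end, so does the median. Hence two paths in `H` with values in `(c, d)`
over a common interval can be exchanged for a path leading from the start of one to the end of the
other, again with values in `(c, d)` (`pathIn_median`). Consequently, if a single path `h` over
`[a, b]` stays in the strip `ℝ × (c, d)`, then any two points of `H` in the strip over `a` and `b`
are joined inside the strip (`pathIn_strip`): an arbitrary path between them is in the strip near
its two ends, and there it can be exchanged with `h`. Applied to a path `h` through `(p, f p)`, this
gives paths of small oscillation over all gaps close to `p` (`local_strip`).

Over each gap a path is chosen whose distance to `f a` is optimal up to `b - a` (`near_opt`), which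
makes `g` continuous (`extend_of_unbounded`). This needs all gaps to be bounded, which is arranged
by adding to `E` all integers at distance at least `1` from `E`, with arbitrary values in `H`.
-/

open Set

open Filter Topology

/-- The points `(a, y)` and `(b, z)` are joined by the graph of a continuous function on `[a, b]`
included in `K`. -/
def PathIn (K : Set (ℝ × ℝ)) (a b y z : ℝ) : Prop :=
  ∃ h : ℝ → ℝ, ContinuousOn h (Icc a b) ∧ h a = y ∧ h b = z ∧ ∀ x ∈ Icc a b, (x, h x) ∈ K

/-- The part of `H` whose second coordinate lies in `(c, d)`. -/
def strip (H : Set (ℝ × ℝ)) (c d : ℝ) : Set (ℝ × ℝ) := {q | q ∈ H ∧ q.2 ∈ Ioo c d}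

lemma glue {h₁ h₂ : ℝ → ℝ} {a b c : ℝ} (hab : a ≤ b) (hbc : b ≤ c)
    (c₁ : ContinuousOn h₁ (Icc a b)) (c₂ : ContinuousOn h₂ (Icc b c)) (e : h₁ b = h₂ b) :
    ∃ h : ℝ → ℝ, ContinuousOn h (Icc a c) ∧ EqOn h h₁ (Icc a b) ∧ EqOn h h₂ (Icc b c) := by
  have e₁ : EqOn (fun x => if x ≤ b then h₁ x else h₂ x) h₁ (Icc a b) := fun x hx => by
    simp [hx.2]
  have e₂ : EqOn (fun x => if x ≤ b then h₁ x else h₂ x) h₂ (Icc b c) := fun x hx => by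
    rcases hx.1.eq_or_lt with rfl | h
    · simp [e]
    · simp [h.not_ge]
  refine ⟨_, ?_, e₁, e₂⟩
  rw [← Icc_union_Icc_eq_Icc hab hbc]
  exact (c₁.congr e₁).union_of_isClosed (c₂.congr e₂) isClosed_Icc isClosed_Icc

lemma PathIn.trans {K : Set (ℝ × ℝ)} {a b c y z w : ℝ} (hab : a ≤ b) (hbc : b ≤ c)
    (p : PathIn K a b y z) (q : PathIn K b c z w) : PathIn K a c y w := by
  obtain ⟨h₁, c₁, s₁, t₁, k₁⟩ := p
  obtain ⟨h₂, c₂, s₂, t₂, k₂⟩ := q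
  obtain ⟨h, hc, e₁, e₂⟩ := glue hab hbc c₁ c₂ (t₁.trans s₂.symm)
  refine ⟨h, hc, ?_, ?_, fun x hx => ?_⟩
  · rw [e₁ ⟨le_rfl, hab⟩, s₁]
  · rw [e₂ ⟨hbc, le_rfl⟩, t₂]
  · rcases le_total x b with hxb | hxb
    · rw [e₁ ⟨hx.1, hxb⟩]; exact k₁ x ⟨hx.1, hxb⟩
    · rw [e₂ ⟨hxb, hx.2⟩]; exact k₂ x ⟨hxb, hx.2⟩

/-- Two paths in the strip over `[a, b]` give a path in the strip from the start of the first to the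
end of the second: the median of both and of any path in `H` with these end points. -/
lemma pathIn_median {H : Set (ℝ × ℝ)} (hH : FunConn H) {a b c d : ℝ} (hab : a < b) {j h : ℝ → ℝ}
    (cj : ContinuousOn j (Icc a b)) (ch : ContinuousOn h (Icc a b))
    (kj : ∀ x ∈ Icc a b, (x, j x) ∈ strip H c d) (kh : ∀ x ∈ Icc a b, (x, h x) ∈ strip H c d) :
    PathIn (strip H c d) a b (j a) (h b) := by
  obtain ⟨k, ck, ka, kb, kk⟩ :=
    hH a (j a) b (h b) (kj a ⟨le_rfl, hab.le⟩).1 (kh b ⟨hab.le, le_rfl⟩).1 hab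
  refine ⟨fun x => max (min (j x) (h x)) (min (max (j x) (h x)) (k x)), ?_, ?_, ?_, fun x hx => ?_⟩
  · exact (cj.inf ch).sup ((cj.sup ch).inf ck)
  · simp only [ka]; grind
  · simp only [kb]; grind
  · obtain ⟨hj, hj'⟩ := kj x hx
    obtain ⟨hh, hh'⟩ := kh x hx
    have hk := kk x hx
    have : max (min (j x) (h x)) (min (max (j x) (h x)) (k x)) = j x ∨
        max (min (j x) (h x)) (min (max (j x) (h x)) (k x)) = h x ∨
        (max (min (j x) (h x)) (min (max (j x) (h x)) (k x)) = k x ∧ k x ∈ Ioo c d) := by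
      simp only [mem_Ioo] at *
      grind
    rcases this with e | e | ⟨e, e'⟩ <;> beta_reduce <;> rw [e]
    · exact ⟨hj, hj'⟩
    · exact ⟨hh, hh'⟩
    · exact ⟨hk, e'⟩

lemma pathIn_strip {H : Set (ℝ × ℝ)} (hH : FunConn H) {a b c d y z : ℝ} (hab : a < b) {h : ℝ → ℝ}
    (ch : ContinuousOn h (Icc a b)) (kh : ∀ x ∈ Icc a b, (x, h x) ∈ strip H c d)
    (hy : (a, y) ∈ strip H c d) (hz : (b, z) ∈ strip H c d) :
    PathIn (strip H c d) a b y z := by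
  obtain ⟨j, cj, rfl, rfl, kj⟩ := hH a y b z hy.1 hz.1 hab
  have hm : a < (a + b) / 2 := by linarith
  have hm' : (a + b) / 2 < b := by linarith
  obtain ⟨u, hau, hum, hu⟩ : ∃ u, a < u ∧ u ≤ (a + b) / 2 ∧ ∀ x ∈ Icc a u, j x ∈ Ioo c d := by
    have h1 : j ⁻¹' Ioo c d ∈ 𝓝[≥] a := by
      rw [← nhdsWithin_Icc_eq_nhdsGE hab]
      exact cj a ⟨le_rfl, hab.le⟩ (isOpen_Ioo.mem_nhds hy.2)
    obtain ⟨u, hu, hs⟩ := (mem_nhdsGE_iff_exists_mem_Ioc_Ico_subset hm).1 h1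
    refine ⟨(a + u) / 2, by linarith [hu.1], by linarith [hu.2, hu.1], fun x hx => hs ⟨hx.1, ?_⟩⟩
    linarith [hu.1, hx.2]
  obtain ⟨v, hvb, hmv, hv⟩ : ∃ v, v < b ∧ (a + b) / 2 ≤ v ∧ ∀ x ∈ Icc v b, j x ∈ Ioo c d := by
    have h1 : j ⁻¹' Ioo c d ∈ 𝓝[≤] b := by
      rw [← nhdsWithin_Icc_eq_nhdsLE hab]
      exact cj b ⟨hab.le, le_rfl⟩ (isOpen_Ioo.mem_nhds hz.2)
    obtain ⟨u, hu, hs⟩ := (mem_nhdsLE_iff_exists_mem_Ico_Ioc_subset hm').1 h1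
    refine ⟨(u + b) / 2, by linarith [hu.2], by linarith [hu.2, hu.1], fun x hx => hs ⟨?_, hx.2⟩⟩
    linarith [hu.2, hx.1]
  have s₁ : Icc a u ⊆ Icc a b := Icc_subset_Icc_right (by linarith)
  have s₂ : Icc u v ⊆ Icc a b := Icc_subset_Icc (by linarith) (by linarith)
  have s₃ : Icc v b ⊆ Icc a b := Icc_subset_Icc_left (by linarith)
  have p₁ : PathIn (strip H c d) a u (j a) (h u) :=
    pathIn_median hH hau (cj.mono s₁) (ch.mono s₁) (fun x hx => ⟨kj x (s₁ hx), hu x hx⟩)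
      (fun x hx => kh x (s₁ hx))
  have p₂ : PathIn (strip H c d) u v (h u) (h v) :=
    ⟨h, ch.mono s₂, rfl, rfl, fun x hx => kh x (s₂ hx)⟩
  have p₃ : PathIn (strip H c d) v b (h v) (j b) :=
    pathIn_median hH hvb (ch.mono s₃) (cj.mono s₃) (fun x hx => kh x (s₃ hx))
      (fun x hx => ⟨kj x (s₃ hx), hv x hx⟩)
  exact p₁.trans hau.le (by linarith) (p₂.trans (by linarith) hvb.le p₃)

/-- Close to a point `(p, y₀)` of `H`, points of `H` are joined by paths staying close to `y₀`. -/
lemma local_strip {H : Set (ℝ × ℝ)} (hH : FunConn H) (hproj : ∀ x, ∃ y, (x, y) ∈ H) {p y₀ : ℝ}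
    (hp : (p, y₀) ∈ H) {ε : ℝ} (hε : 0 < ε) :
    ∃ δ > 0, ∀ a b y z, p - δ < a → a < b → b < p + δ →
      (a, y) ∈ strip H (y₀ - ε) (y₀ + ε) → (b, z) ∈ strip H (y₀ - ε) (y₀ + ε) →
      PathIn (strip H (y₀ - ε) (y₀ + ε)) a b y z := by
  obtain ⟨yl, hl⟩ := hproj (p - 1)
  obtain ⟨yr, hr⟩ := hproj (p + 1)
  obtain ⟨h₁, c₁, -, t₁, k₁⟩ := hH _ _ _ _ hl hp (by linarith)
  obtain ⟨h₂, c₂, s₂, -, k₂⟩ := hH _ _ _ _ hp hr (by linarith)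
  obtain ⟨h, hc, e₁, e₂⟩ := glue (by linarith) (by linarith) c₁ c₂ (t₁.trans s₂.symm)
  have hhp : h p = y₀ := by rw [e₁ ⟨by linarith, le_rfl⟩, t₁]
  have hk : ∀ x ∈ Icc (p - 1) (p + 1), (x, h x) ∈ H := fun x hx => by
    rcases le_total x p with hxp | hxp
    · rw [e₁ ⟨hx.1, hxp⟩]; exact k₁ x ⟨hx.1, hxp⟩
    · rw [e₂ ⟨hxp, hx.2⟩]; exact k₂ x ⟨hxp, hx.2⟩
  have hcp : ContinuousAt h p := hc.continuousAt (Icc_mem_nhds (by linarith) (by linarith))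
  obtain ⟨δ, hδ, hδ'⟩ := Metric.continuousAt_iff.1 hcp ε hε
  refine ⟨min δ 1, by positivity, fun a b y z ha hab hb hy hz => ?_⟩
  have m₁ := min_le_left δ 1
  have m₂ := min_le_right δ 1
  refine pathIn_strip hH hab (hc.mono (Icc_subset_Icc (by linarith) (by linarith)))
    (fun x hx => ⟨hk x ⟨by linarith [hx.1], by linarith [hx.2]⟩, ?_⟩) hy hz
  have : dist x p < δ := by
    rw [Real.dist_eq, abs_lt]; constructor <;> linarith [hx.1, hx.2]
  have := hδ' this
  rw [hhp, Real.dist_eq, abs_lt] at this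
  constructor <;> simp only <;> linarith

/-- Some path from `(a, y)` to `(b, z)` in `H` has, up to `b - a`, the least possible distance to
the constant `y`. -/
lemma near_opt {H : Set (ℝ × ℝ)} (hH : FunConn H) {a b y z : ℝ} (hab : a < b)
    (hy : (a, y) ∈ H) (hz : (b, z) ∈ H) :
    ∃ h : ℝ → ℝ, ContinuousOn h (Icc a b) ∧ h a = y ∧ h b = z ∧ (∀ x ∈ Icc a b, (x, h x) ∈ H) ∧
      ∀ r, PathIn {q | q ∈ H ∧ |q.2 - y| ≤ r} a b y z → ∀ x ∈ Icc a b, |h x - y| ≤ r + (b - a) := by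
  set S : Set ℝ := {r | PathIn {q | q ∈ H ∧ |q.2 - y| ≤ r} a b y z} with hS
  have hne : S.Nonempty := by
    obtain ⟨h, hc, h1, h2, h3⟩ := hH a y b z hy hz hab
    obtain ⟨C, hC⟩ := isCompact_Icc.exists_bound_of_continuousOn
      (hc.sub (continuousOn_const (c := y)))
    exact ⟨C, h, hc, h1, h2, fun x hx => ⟨h3 x hx, hC x hx⟩⟩
  have hbdd : BddBelow S := by
    refine ⟨0, ?_⟩
    rintro r ⟨h, -, -, -, h3⟩
    exact (abs_nonneg _).trans (h3 a ⟨le_rfl, hab.le⟩).2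
  obtain ⟨r, ⟨h, hc, h1, h2, h3⟩, hr⟩ :=
    exists_lt_of_csInf_lt hne (show sInf S < sInf S + (b - a) by linarith)
  refine ⟨h, hc, h1, h2, fun x hx => (h3 x hx).1, fun r' hr' x hx => ?_⟩
  have e1 := (h3 x hx).2
  have e2 := csInf_le hbdd hr'
  simp only at e1
  linarith

/-- The extension property for a closed set `E` all of whose gaps are bounded. -/
lemma extend_of_unbounded {H : Set (ℝ × ℝ)} (hH : FunConn H) (hproj : ∀ x, ∃ y, (x, y) ∈ H)
    {f : ℝ → ℝ} {E : Set ℝ} (hE : IsClosed E) (hf : ContinuousOn f E)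
    (hgraph : ∀ x ∈ E, (x, f x) ∈ H) (hlo : ∀ x, ∃ a ∈ E, a ≤ x) (hhi : ∀ x, ∃ b ∈ E, x ≤ b) :
    ∃ g : ℝ → ℝ, Continuous g ∧ EqOn g f E ∧ ∀ x, (x, g x) ∈ H := by
  classical
  have hG : ∀ a b, ∃ h : ℝ → ℝ, a ∈ E → b ∈ E → a < b →
      ContinuousOn h (Icc a b) ∧ h a = f a ∧ h b = f b ∧ (∀ x ∈ Icc a b, (x, h x) ∈ H) ∧
      ∀ r, PathIn {q | q ∈ H ∧ |q.2 - f a| ≤ r} a b (f a) (f b) →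
        ∀ x ∈ Icc a b, |h x - f a| ≤ r + (b - a) := by
    intro a b
    by_cases hab : a ∈ E ∧ b ∈ E ∧ a < b
    · obtain ⟨h, hh⟩ := near_opt hH hab.2.2 (hgraph a hab.1) (hgraph b hab.2.1)
      exact ⟨h, fun _ _ _ => hh⟩
    · exact ⟨f, fun h1 h2 h3 => (hab ⟨h1, h2, h3⟩).elim⟩
  choose G hG using hG
  have hgap : ∀ x, ∃ a b, x ∉ E → a ∈ E ∧ b ∈ E ∧ a < x ∧ x < b ∧ ∀ t ∈ Ioo a b, t ∉ E := by
    intro x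
    obtain ⟨a₀, ha₀, ha₀x⟩ := hlo x
    obtain ⟨b₀, hb₀, hb₀x⟩ := hhi x
    have bA : BddAbove (E ∩ Iic x) := ⟨x, fun t ht => ht.2⟩
    have bB : BddBelow (E ∩ Ici x) := ⟨x, fun t ht => ht.2⟩
    have hA := (hE.inter isClosed_Iic).csSup_mem ⟨a₀, ha₀, ha₀x⟩ bA
    have hB := (hE.inter isClosed_Ici).csInf_mem ⟨b₀, hb₀, hb₀x⟩ bB
    refine ⟨sSup (E ∩ Iic x), sInf (E ∩ Ici x), fun hx => ⟨hA.1, hB.1, ?_, ?_, ?_⟩⟩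
    · exact lt_of_le_of_ne hA.2 fun e => hx (e ▸ hA.1)
    · exact lt_of_le_of_ne hB.2 fun e => hx (e ▸ hB.1)
    · intro t ht htE
      rcases le_total t x with h | h
      · exact ht.1.not_ge (le_csSup bA ⟨htE, h⟩)
      · exact ht.2.not_ge (csInf_le bB ⟨htE, h⟩)
  choose l r hlr using hgap
  set g : ℝ → ℝ := fun x => if x ∈ E then f x else G (l x) (r x) x with hg
  have gE : ∀ x ∈ E, g x = f x := fun x hx => by simp [hg, hx]
  have gapeq : ∀ a b x, a ∈ E → b ∈ E → (∀ t ∈ Ioo a b, t ∉ E) → x ∈ Ioo a b → g x = G a b x := by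
    intro a b x ha hb hab hx
    have hxE := hab x hx
    obtain ⟨h1, h2, h3, h4, h5⟩ := hlr x hxE
    have e1 : l x = a := by
      rcases lt_trichotomy (l x) a with h | h | h
      · exact (h5 a ⟨h, hx.1.trans h4⟩ ha).elim
      · exact h
      · exact (hab _ ⟨h, h3.trans hx.2⟩ h1).elim
    have e2 : r x = b := by
      rcases lt_trichotomy (r x) b with h | h | h
      · exact (hab _ ⟨hx.1.trans h4, h⟩ h2).elim
      · exact h
      · exact (h5 b ⟨h3.trans hx.2, h⟩ hb).elim
    simp [hg, hxE, e1, e2]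
  refine ⟨g, continuous_iff_continuousAt.2 fun p => ?_, gE, fun x => ?_⟩
  · by_cases hp : p ∈ E
    · have hgp := gE p hp
      rw [Metric.continuousAt_iff]
      intro ε hε
      obtain ⟨δ₁, hδ₁, hloc⟩ := local_strip hH hproj (hgraph p hp) (show 0 < ε / 4 by linarith)
      obtain ⟨δ₂, hδ₂, hfc⟩ := Metric.continuousOn_iff.1 hf p hp (ε / 4) (by linarith)
      obtain ⟨δ, hδ, d1, d2, d3⟩ : ∃ δ > 0, δ ≤ δ₁ ∧ δ ≤ δ₂ ∧ δ ≤ ε / 16 :=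
        ⟨min δ₁ (min δ₂ (ε / 16)), by positivity, by simp, by simp, by simp⟩
      have hfE : ∀ x ∈ E, p - δ < x → x < p + δ → |f x - f p| < ε / 4 := fun x hx h1 h2 =>
        hfc x hx (by rw [Real.dist_eq, abs_lt]; constructor <;> linarith)
      -- Over gaps inside `(p - δ, p + δ)` the chosen paths stay close to `f p`.
      have hnear : ∀ a b, a ∈ E → b ∈ E → p - δ < a → a < b → b < p + δ →
          ∀ x ∈ Icc a b, |G a b x - f p| < ε := by
        intro a b ha hb hpa hab hbp x hx
        have ea := abs_lt.1 (hfE a ha hpa (by linarith))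
        have eb := abs_lt.1 (hfE b hb (by linarith) hbp)
        obtain ⟨h, hc, h1, h2, h3⟩ := hloc a b (f a) (f b) (by linarith) hab (by linarith)
          ⟨hgraph a ha, by constructor <;> simp only <;> linarith⟩
          ⟨hgraph b hb, by constructor <;> simp only <;> linarith⟩
        have hGx := (hG a b ha hb hab).2.2.2.2 (ε / 2) ⟨h, hc, h1, h2, fun t ht => ⟨(h3 t ht).1, by
          have := (h3 t ht).2
          simp only [mem_Ioo] at this
          rw [abs_le]
          constructor <;> simp only <;> linarith⟩⟩ x hx
        rw [abs_le] at hGx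
        rw [abs_lt]
        constructor <;> linarith
      -- On each side, either `E` has a point within `δ` of `p`, or `p` is an end of a gap.
      have hright : ∃ η > 0, ∀ x, p < x → x < p + η → |g x - f p| < ε := by
        by_cases hcase : ∃ b ∈ E, p < b ∧ b < p + δ
        · obtain ⟨b, hb, hpb, hbδ⟩ := hcase
          refine ⟨b - p, by linarith, fun x hx hxb => ?_⟩
          by_cases hxE : x ∈ E
          · rw [gE x hxE]; linarith [hfE x hxE (by linarith) (by linarith)]
          · obtain ⟨h1, h2, h3, h4, h5⟩ := hlr x hxE
            have hl : p ≤ l x := not_lt.1 fun h => h5 p ⟨h, hx.trans h4⟩ hp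
            have hr : r x ≤ b := not_lt.1 fun h => h5 b ⟨by linarith, h⟩ hb
            rw [gapeq _ _ x h1 h2 h5 ⟨h3, h4⟩]
            exact hnear _ _ h1 h2 (by linarith) (h3.trans h4) (by linarith) x ⟨h3.le, h4.le⟩
        · push Not at hcase
          have hxE : p + δ / 2 ∉ E := fun h => by
            linarith [hcase _ h (by linarith)]
          obtain ⟨h1, h2, h3, h4, h5⟩ := hlr _ hxE
          have hl : l (p + δ / 2) = p := by
            rcases lt_trichotomy (l (p + δ / 2)) p with h | h | h
            · exact (h5 p ⟨h, by linarith⟩ hp).elim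
            · exact h
            · linarith [hcase _ h1 h]
          rw [hl] at h1 h3 h5
          obtain ⟨hc, hGp, -⟩ := hG _ _ h1 h2 (h3.trans h4)
          obtain ⟨η, hη, hη'⟩ := Metric.continuousOn_iff.1 hc p ⟨le_rfl, by linarith⟩ ε hε
          refine ⟨min η (δ / 2), by positivity, fun x hx hxη => ?_⟩
          have m1 := min_le_left η (δ / 2)
          have m2 := min_le_right η (δ / 2)
          rw [gapeq _ _ x h1 h2 h5 ⟨hx, by linarith⟩, ← hGp]
          exact hη' x ⟨hx.le, by linarith⟩ (by rw [Real.dist_eq, abs_lt]; constructor <;> linarith)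
      have hleft : ∃ η > 0, ∀ x, x < p → p - η < x → |g x - f p| < ε := by
        by_cases hcase : ∃ a ∈ E, a < p ∧ p - δ < a
        · obtain ⟨a, ha, hap, haδ⟩ := hcase
          refine ⟨p - a, by linarith, fun x hx hxa => ?_⟩
          by_cases hxE : x ∈ E
          · rw [gE x hxE]; linarith [hfE x hxE (by linarith) (by linarith)]
          · obtain ⟨h1, h2, h3, h4, h5⟩ := hlr x hxE
            have hr : r x ≤ p := not_lt.1 fun h => h5 p ⟨h3.trans hx, h⟩ hp
            have hl : a ≤ l x := not_lt.1 fun h => h5 a ⟨h, by linarith⟩ ha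
            rw [gapeq _ _ x h1 h2 h5 ⟨h3, h4⟩]
            exact hnear _ _ h1 h2 (by linarith) (h3.trans h4) (by linarith) x ⟨h3.le, h4.le⟩
        · push Not at hcase
          have hxE : p - δ / 2 ∉ E := fun h => by
            linarith [hcase _ h (by linarith)]
          obtain ⟨h1, h2, h3, h4, h5⟩ := hlr _ hxE
          have hr : r (p - δ / 2) = p := by
            rcases lt_trichotomy (r (p - δ / 2)) p with h | h | h
            · linarith [hcase _ h2 h]
            · exact h
            · exact (h5 p ⟨by linarith, h⟩ hp).elim
          rw [hr] at h2 h4 h5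
          obtain ⟨hc, -, hGp, -⟩ := hG _ _ h1 h2 (h3.trans h4)
          obtain ⟨η, hη, hη'⟩ := Metric.continuousOn_iff.1 hc p ⟨by linarith, le_rfl⟩ ε hε
          refine ⟨min η (δ / 2), by positivity, fun x hx hxη => ?_⟩
          have m1 := min_le_left η (δ / 2)
          have m2 := min_le_right η (δ / 2)
          rw [gapeq _ _ x h1 h2 h5 ⟨by linarith, hx⟩, ← hGp]
          exact hη' x ⟨by linarith, hx.le⟩ (by rw [Real.dist_eq, abs_lt]; constructor <;> linarith)
      obtain ⟨η₁, hη₁, H₁⟩ := hright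
      obtain ⟨η₂, hη₂, H₂⟩ := hleft
      refine ⟨min η₁ η₂, by positivity, fun {x} hx => ?_⟩
      have m1 := min_le_left η₁ η₂
      have m2 := min_le_right η₁ η₂
      rw [Real.dist_eq, abs_lt] at hx
      rw [hgp, Real.dist_eq]
      rcases lt_trichotomy x p with h | h | h
      · exact H₂ x h (by linarith)
      · rw [h, hgp]; simpa using hε
      · exact H₁ x h (by linarith)
    · obtain ⟨h1, h2, h3, h4, h5⟩ := hlr p hp
      have hc := (hG _ _ h1 h2 (h3.trans h4)).1.continuousAt (Icc_mem_nhds h3 h4)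
      refine hc.congr ?_
      filter_upwards [Ioo_mem_nhds h3 h4] with x hx
      exact (gapeq _ _ x h1 h2 h5 hx).symm
  · by_cases hx : x ∈ E
    · rw [gE x hx]; exact hgraph x hx
    · obtain ⟨h1, h2, h3, h4, h5⟩ := hlr x hx
      rw [gapeq _ _ x h1 h2 h5 ⟨h3, h4⟩]
      exact (hG _ _ h1 h2 (h3.trans h4)).2.2.2.1 x ⟨h3.le, h4.le⟩

theorem stmt_14 (H : Set (ℝ × ℝ)) (hH : FunConn H) (hproj : Prod.fst '' H = Set.univ)
    (f : ℝ → ℝ) (hf : Continuous f) (E : Set ℝ) (hE : IsClosed E)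
    (hgraph : ∀ x ∈ E, (x, f x) ∈ H) :
    ∃ g : ℝ → ℝ, Continuous g ∧ Set.EqOn g f E ∧ ∀ x, (x, g x) ∈ H := by
  classical
  have hproj' : ∀ x, ∃ y, (x, y) ∈ H := fun x => by
    obtain ⟨⟨x', y⟩, hq, rfl⟩ : x ∈ Prod.fst '' H := hproj ▸ mem_univ x
    exact ⟨y, hq⟩
  choose y hy using hproj'
  set S : Set ℝ := range ((↑) : ℤ → ℝ) ∩ ⋂ e ∈ E, {x | 1 ≤ |x - e|} with hS
  have hSc : IsClosed S := by
    refine Int.isClosedEmbedding_coe_real.isClosed_range.inter (isClosed_biInter fun e _ => ?_)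
    exact isClosed_le continuous_const (by fun_prop)
  have hSE : ∀ x ∈ S, ∀ e ∈ E, 1 ≤ |x - e| := fun x hx e he => by
    have := hx.2
    simp only [mem_iInter, mem_ofPred_eq] at this
    exact this e he
  have hSnE : ∀ x ∈ S, x ∉ E := fun x hx he => by
    have := hSE x hx x he
    norm_num at this
  have hnS : ∀ n : ℤ, (n : ℝ) ∉ S → ∃ e ∈ E, |n - e| < 1 := fun n hn => by
    by_contra! hcon
    exact hn ⟨⟨n, rfl⟩, by simpa using hcon⟩
  set F : ℝ → ℝ := fun x => if x ∈ E then f x else y x with hF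
  have hFE : EqOn F f E := fun x hx => by simp [hF, hx]
  have hFS : EqOn F y S := fun x hx => by simp [hF, hSnE x hx]
  have hyS : ContinuousOn y S := by
    intro x hx
    rw [Metric.continuousWithinAt_iff]
    intro ε hε
    refine ⟨1, one_pos, fun {t} ht htx => ?_⟩
    obtain ⟨⟨m, rfl⟩, -⟩ := hx
    obtain ⟨⟨n, rfl⟩, -⟩ := ht
    rw [Real.dist_eq] at htx
    have : |n - m| < 1 := by exact_mod_cast htx
    have : n = m := by rw [Int.abs_lt_one_iff] at this; linarith
    simpa [this] using hε
  obtain ⟨g, hgc, hgE, hgH⟩ := extend_of_unbounded hH (fun x => ⟨y x, hy x⟩) (f := F)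
    (hE.union hSc)
    ((hf.continuousOn.congr hFE).union_of_isClosed (hyS.congr hFS) hE hSc)
    (fun x hx => by
      rcases hx with hx | hx
      · rw [hFE hx]; exact hgraph x hx
      · rw [hFS hx]; exact hy x)
    (fun x => by
      by_cases hn : ((⌊x⌋ - 1 : ℤ) : ℝ) ∈ S
      · exact ⟨_, Or.inr hn, by push_cast; linarith [Int.floor_le x]⟩
      · obtain ⟨e, he, h⟩ := hnS _ hn
        rw [abs_lt] at h
        push_cast at h
        exact ⟨e, Or.inl he, by linarith [Int.floor_le x]⟩)
    (fun x => by
      by_cases hn : ((⌈x⌉ + 1 : ℤ) : ℝ) ∈ S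
      · exact ⟨_, Or.inr hn, by push_cast; linarith [Int.le_ceil x]⟩
      · obtain ⟨e, he, h⟩ := hnS _ hn
        rw [abs_lt] at h
        push_cast at h
        exact ⟨e, Or.inl he, by linarith [Int.le_ceil x]⟩)
  exact ⟨g, hgc, fun x hx => (hgE (Or.inl hx)).trans (hFE hx), hgH⟩
end
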